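/- arXiv:2605.14574 — 2 statements merged into one kernel-verified Lean document; each statement's English description precedes it below -/
import Mathlib

section
/- There exists a constant C > 0 such that for every integer m ≥ 2, the number of Markoff triples (a, b, c) of positive integers with a ≤ b ≤ c, a² + b² + c² = 3·a·b·c, and c = m is at most C·(log(log(3·m)))². -/
/-- A Markoff triple is a triple `(a, b, c)` of positive integers with
`a² + b² + c² = 3·a·b·c`. -/
def IsMarkoffTriple (t : ℕ × ℕ × ℕ) : Prop :=
  0 < t.1 ∧ 0 < t.2.1 ∧ 0 < t.2.2 ∧
    t.1 ^ 2 + t.2.1 ^ 2 + t.2.2 ^ 2 = 3 * t.1 * t.2.1 * t.2.2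

namespace MK

noncomputable def E (x : ℝ) : ℝ := (x + Real.sqrt (x ^ 2 - 4)) / 2

lemma E_half {x : ℝ} : x / 2 ≤ E x := by
  unfold E; have := Real.sqrt_nonneg (x ^ 2 - 4); linarith

lemma E_pos {x : ℝ} (h : 2 ≤ x) : 1 ≤ E x := by
  have := E_half (x := x); linarith

lemma E_eq {x : ℝ} (h : 2 ≤ x) : E x + 1 / E x = x := by
  have h1 := E_pos h
  have h2 : Real.sqrt (x ^ 2 - 4) ^ 2 = x ^ 2 - 4 := Real.sq_sqrt (by nlinarith)
  have h3 : E x ^ 2 - x * E x + 1 = 0 := by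
    unfold E; nlinarith
  field_simp
  linarith

lemma E_ge {x : ℝ} (h : 2 ≤ x) : x - 1 ≤ E x := by
  have h1 := E_pos h
  have h2 := E_eq h
  have : 1 / E x ≤ 1 := by rw [div_le_one (by linarith)]; exact h1
  linarith

lemma E_le {x : ℝ} (h : 2 ≤ x) : E x ≤ x := by
  have h1 := E_pos h
  have h2 := E_eq h
  have : 0 < 1 / E x := by positivity
  linarith

lemma lt_E {x X Y : ℝ} (h : 2 ≤ x) (hX : 0 < X) (hXY : 1 < X * Y) (hs : X + Y = x) :
    X < E x := by
  have h1 := E_pos h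
  have h2 := E_eq h
  by_contra hc
  push Not at hc
  have h3 : E x * x = E x ^ 2 + 1 := by
    have : E x * (1 / E x) = 1 := by field_simp
    linear_combination (- E x) * h2 + this
  have h4 : X ^ 2 - x * X + 1 < 0 := by nlinarith
  have h5 : (X - E x) * (X - (x - E x)) = X ^ 2 - x * X + 1 := by nlinarith
  have h6 : x - E x ≤ 1 := by have := E_ge h; linarith
  nlinarith [mul_nonneg (sub_nonneg.2 hc) (by linarith : 0 ≤ X - (x - E x))]

lemma fan_core {x y z X : ℝ} (hx : 3 ≤ x) (hy : 3 ≤ y) (hz : 3 ≤ z)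
    (hm : x ^ 2 + y ^ 2 + z ^ 2 = x * y * z) (hX : 0 < X)
    (hE : X * (E y - 1 / E y) = z - x / E y) : X < E x ∧ X * E y < E z := by
  have hy2 : (2:ℝ) ≤ y := by linarith
  have h1 : 2 ≤ E y := by have := E_ge hy2; linarith
  have h2 := E_eq hy2
  set e := E y with he
  set f := 1 / e with hf
  have hef : e * f = 1 := by rw [hf]; field_simp
  have hfp : 0 < f := by positivity
  have hd : 0 < e - f := by nlinarith
  have hE' : X * (e - f) = z - x * f := by rw [hE, hf]; ring
  set Y := (x * e - z) / (e - f) with hY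
  have hY' : Y * (e - f) = x * e - z := by rw [hY]; field_simp
  have hs : X + Y = x := by
    have : (X + Y - x) * (e - f) = 0 := by linear_combination hE' + hY'
    rcases mul_eq_zero.1 this with h | h <;> linarith
  have hp : (X * Y) * (e - f) ^ 2 = y ^ 2 := by
    have : (X * Y) * (e - f) ^ 2 = (z - x * f) * (x * e - z) := by
      rw [← hE', ← hY']; ring
    rw [this]
    have : (z - x * f) * (x * e - z) = x * z * (e + f) - z ^ 2 - x ^ 2 * (e * f) := by ring
    rw [this, hef, h2]; linarith
  have hd2 : (e - f) ^ 2 = y ^ 2 - 4 := by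
    rw [← h2]; linear_combination -4 * hef
  have hXY : 1 < X * Y := by
    rw [hd2] at hp
    by_contra hc
    push Not at hc
    nlinarith
  have hzz : X * e + Y * f = z := by
    have : (X * e + Y * f - z) * (e - f) = 0 := by
      linear_combination e * hE' + f * hY' 
    rcases mul_eq_zero.1 this with h | h <;> linarith
  refine ⟨lt_E (by linarith) hX hXY hs, lt_E (by linarith) (by positivity) ?_ hzz⟩
  calc 1 < X * Y := hXY
    _ = X * e * (Y * f) := by linear_combination (- X * Y) * hef

set_option maxHeartbeats 1000000 in
lemma defect {x y z : ℝ} (hx : 3 ≤ x) (hy : 3 ≤ y) (hz : 15 ≤ z)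
    (hm : x ^ 2 + y ^ 2 + z ^ 2 = x * y * z) (hzz : 2 / 3 * (x * y) ≤ z) :
    Real.log (E z) ≤ Real.log (E x) + Real.log (E y) ∧
    Real.log (E x) + Real.log (E y) - Real.log (E z) ≤ 9 / z ^ 2 := by
  have hA := E_ge (x := x) (by linarith)
  have hB := E_ge (x := y) (by linarith)
  have hZ := E_ge (x := z) (by linarith)
  have hA1 := E_le (x := x) (by linarith)
  have hB1 := E_le (x := y) (by linarith)
  have hA2 := E_eq (x := x) (by linarith)
  have hB2 := E_eq (x := y) (by linarith)
  have hZ2 := E_eq (x := z) (by linarith)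
  set A := E x
  set B := E y
  set Z := E z
  have hAp : 2 ≤ A := by linarith
  have hBp : 2 ≤ B := by linarith
  have hZp : 14 ≤ Z := by linarith
  set W := A * B with hW
  have hWp : 4 ≤ W := by nlinarith
  set u := A / B + B / A with hu
  have hxy : x * y = W + 1 / W + u := by
    rw [← hA2, ← hB2, hW, hu]; field_simp; ring
  have hxx : x ^ 2 + y ^ 2 - 4 = (W + 1 / W) * u := by
    rw [← hA2, ← hB2, hW, hu]; field_simp; ring
  have hprod : (W + 1 / W - z) * (z - u) = 4 := by
    have : z ^ 2 - (x * y) * z + (x ^ 2 + y ^ 2 - 4) + 4 = 0 := by linarith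
    rw [hxy, hxx] at this
    linarith
  have hu2 : u ≤ z / 2 := by
    have h1 : A / B ≤ A / 2 := by gcongr
    have h2 : B / A ≤ B / 2 := by gcongr
    nlinarith
  have hdp : 0 < W + 1 / W - z := by
    by_contra hc
    push Not at hc
    nlinarith
  have hd8 : (W + 1 / W - z) * z ≤ 8 := by nlinarith
  have hfac : W + 1 / W - z = (W - Z) * (1 - 1 / (W * Z)) := by
    rw [← hZ2]; field_simp; ring
  have hWZ : 56 ≤ W * Z := by nlinarith
  have hi : 1 / (W * Z) ≤ 1 / 56 := by gcongr
  have hWZ' : Z < W := by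
    rw [hfac] at hdp
    have : 0 < 1 - 1 / (W * Z) := by linarith
    have := (mul_pos_iff_of_pos_right this).1 hdp
    linarith
  have hWZ2 : 196 ≤ W * Z := by nlinarith
  have hi2 : 1 / (W * Z) ≤ 1 / 196 := by gcongr
  have hlog : Real.log A + Real.log B = Real.log W := by
    rw [hW, Real.log_mul (by linarith) (by linarith)]
  rw [hlog]
  refine ⟨Real.log_le_log (by linarith) hWZ'.le, ?_⟩
  rw [← Real.log_div (by linarith) (by linarith)]
  have h1 : Real.log (W / Z) ≤ W / Z - 1 := Real.log_le_sub_one_of_pos (by positivity)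
  refine h1.trans ?_
  have h2 : (W - Z) * z ≤ 8 * (196 / 195) := by
    rw [hfac] at hd8
    have h3 : 0 ≤ (W - Z) * z := mul_nonneg (by linarith) (by linarith)
    have h4 := mul_le_mul_of_nonneg_left (by linarith : (195:ℝ) / 196 ≤ 1 - 1 / (W * Z)) h3
    have h5 : (W - Z) * z * (1 - 1 / (W * Z)) = (W - Z) * (1 - 1 / (W * Z)) * z := by ring
    linarith
  have h3 : z ≤ Z * (197 / 196) := by
    have : 1 / Z ≤ Z / 196 := by
      rw [div_le_div_iff₀ (by linarith) (by norm_num)]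
      nlinarith
    linarith
  have h4 : W / Z - 1 = (W - Z) / Z := by field_simp
  rw [h4, div_le_div_iff₀ (by linarith) (by positivity)]
  have h5 := mul_le_mul h2 h3 (by linarith) (by norm_num)
  have h6 : (W - Z) * z ^ 2 = (W - Z) * z * z := by ring
  linarith

structure St where
  a : ℤ
  b : ℤ
  c : ℤ
  p1 : ℤ
  p2 : ℤ
  q1 : ℤ
  q2 : ℤ

def step (d : Bool) (S : St) : St :=
  match d with
  | true => ⟨S.a, S.c, 3 * S.a * S.c - S.b, S.p1, S.p2, S.p1 + S.q1, S.p2 + S.q2⟩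
  | false => ⟨S.c, S.b, 3 * S.c * S.b - S.a, S.p1 + S.q1, S.p2 + S.q2, S.q1, S.q2⟩

def run (S : St) : List Bool → St
  | [] => S
  | d :: w => step d (run S w)

def swap (S : St) : St := ⟨S.b, S.a, S.c, S.q1, S.q2, S.p1, S.p2⟩

def root : St := ⟨1, 2, 5, 1, 0, 0, 1⟩

lemma run_append (S : St) (r w : List Bool) : run S (r ++ w) = run (run S w) r := by
  induction r with
  | nil => rfl
  | cons d r ih => simp [run, ih]

lemma swap_run (S : St) (r : List Bool) : swap (run S r) = run (swap S) (r.map (!·)) := by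
  induction r with
  | nil => rfl
  | cons d r ih =>
    simp only [run, List.map_cons]
    rw [← ih]
    cases d <;> simp [step, swap] <;> (try constructor) <;> ring_nf <;> simp

structure Good (S : St) : Prop where
  ha : 1 ≤ S.a
  hb : 1 ≤ S.b
  hc : 5 ≤ S.c
  h2 : 2 * S.a * S.b ≤ S.c
  hm : S.a ^ 2 + S.b ^ 2 + S.c ^ 2 = 3 * S.a * S.b * S.c

lemma Good.swap {S : St} (h : Good S) : Good (swap S) := by
  obtain ⟨h1, h2, h3, h4, h5⟩ := h
  constructor <;> simp only [MK.swap] <;> first | assumption | linarith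

lemma Good.bc {S : St} (h : Good S) : S.b ≤ S.a * S.c ∧ S.a ≤ S.c * S.b := by
  obtain ⟨h1, h2, h3, h4, h5⟩ := h
  constructor <;> nlinarith [mul_pos (by linarith : 0 < S.a) (by linarith : 0 < S.b)]

lemma Good.step {S : St} (h : Good S) (d : Bool) : Good (step d S) := by
  have hbc := h.bc
  obtain ⟨h1, h2, h3, h4, h5⟩ := h
  cases d <;> constructor <;> simp only [MK.step] <;> first | assumption | linarith | nlinarith

lemma Good.run {S : St} (h : Good S) (r : List Bool) : Good (run S r) := by
  induction r with
  | nil => exact h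
  | cons d r ih => exact ih.step d

lemma good_root : Good root := by constructor <;> norm_num [root]

lemma step_c_ge {S : St} (h : Good S) (d : Bool) : 2 * S.c ≤ (step d S).c := by
  have hbc := h.bc
  obtain ⟨h1, h2, h3, h4, h5⟩ := h
  cases d <;> simp only [MK.step] <;> nlinarith

noncomputable def N (c : ℤ) : ℝ := Real.log (E (3 * c))

lemma Good.defect {S : St} (h : Good S) :
    N S.c ≤ N S.a + N S.b ∧ N S.a + N S.b - N S.c ≤ 1 / (S.c : ℝ) ^ 2 := by
  obtain ⟨h1, h2, h3, h4, h5⟩ := h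
  have h1' : (1:ℝ) ≤ S.a := by exact_mod_cast h1
  have h2' : (1:ℝ) ≤ S.b := by exact_mod_cast h2
  have h3' : (5:ℝ) ≤ S.c := by exact_mod_cast h3
  have h4' : (2:ℝ) * S.a * S.b ≤ S.c := by exact_mod_cast h4
  have h5' : (S.a:ℝ) ^ 2 + S.b ^ 2 + S.c ^ 2 = 3 * S.a * S.b * S.c := by exact_mod_cast h5
  have := MK.defect (x := 3 * S.a) (y := 3 * S.b) (z := 3 * S.c) (by linarith) (by linarith)
    (by linarith) (by nlinarith) (by nlinarith)
  unfold N
  refine ⟨this.1, this.2.trans (le_of_eq ?_)⟩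
  field_simp; norm_num

structure J1 (l m s : ℝ) (c : ℝ) (S : St) : Prop where
  hp : l * S.p1 + m * S.p2 + s ≤ N S.a
  hq : l * S.q1 + m * S.q2 + s ≤ N S.b
  hc : 4 * c ≤ S.c

structure J2 (l m s : ℝ) (c : ℤ) (S : St) : Prop where
  hb : S.b = c
  hq : l * S.q1 + m * S.q2 = N S.b
  hX : ∃ X : ℝ, 0 < X ∧ Real.log X = l * S.p1 + m * S.p2 + s ∧
    X * (E (3 * c) - 1 / E (3 * c)) = 3 * S.c - 3 * S.a / E (3 * c)

lemma J1.med {l m s : ℝ} {c : ℤ} {S : St} (hc1 : 1 ≤ c) (hs : 2 / (9 * (c:ℝ) ^ 2) ≤ s)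
    (h : Good S) (hJ : J1 l m s c S) :
    l * (S.p1 + S.q1) + m * (S.p2 + S.q2) + s ≤ N S.c := by
  have hd := h.defect.2
  have hc1' : (1:ℝ) ≤ c := by exact_mod_cast hc1
  have : 1 / (S.c:ℝ) ^ 2 ≤ 1 / (4 * (c:ℝ)) ^ 2 := by
    have := hJ.hc
    gcongr
  have h3 : 1 / (4 * (c:ℝ)) ^ 2 ≤ 2 / (9 * (c:ℝ) ^ 2) := by
    rw [div_le_div_iff₀ (by positivity) (by positivity)]
    nlinarith
  have := hJ.hp
  have := hJ.hq
  linarith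

lemma J2.med {l m s : ℝ} {c : ℤ} {S : St} (h : Good S) (hJ : J2 l m s c S) :
    l * S.p1 + m * S.p2 + s ≤ N S.a ∧
    l * (S.p1 + S.q1) + m * (S.p2 + S.q2) + s ≤ N S.c := by
  obtain ⟨hb, hq, X, hX, hlX, hE⟩ := hJ
  subst hb
  obtain ⟨h1, h2, h3, h4, h5⟩ := h
  have h1' : (1:ℝ) ≤ S.a := by exact_mod_cast h1
  have h2' : (1:ℝ) ≤ S.b := by exact_mod_cast h2
  have h3' : (5:ℝ) ≤ S.c := by exact_mod_cast h3
  have h5' : (S.a:ℝ) ^ 2 + S.b ^ 2 + S.c ^ 2 = 3 * S.a * S.b * S.c := by exact_mod_cast h5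
  have := fan_core (x := 3 * S.a) (y := 3 * S.b) (z := 3 * S.c) (X := X) (by linarith) (by linarith)
    (by linarith) (by nlinarith) hX hE
  have hEp := E_pos (x := 3 * S.b) (by linarith)
  have e1 : Real.log X ≤ N S.a := Real.log_le_log hX this.1.le
  have e2 : Real.log (X * E (3 * S.b)) ≤ N S.c := Real.log_le_log (by positivity) this.2.le
  rw [Real.log_mul (by positivity) (by positivity)] at e2
  change _ + N S.b ≤ _ at e2
  constructor <;> linarith

lemma fan {l m s : ℝ} {S : St} (h : Good S) (hs : 2 / (9 * (S.b:ℝ) ^ 2) ≤ s)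
    (hJ : J2 l m s S.b S) (r : List Bool) :
    J1 l m s S.b (run S r) ∨ J2 l m s S.b (run S r) := by
  have hb := h.hb
  induction r with
  | nil => exact Or.inr hJ
  | cons d r ih =>
    have hg : Good (run S r) := h.run r
    simp only [run]
    generalize run S r = T at ih hg
    generalize S.b = c at *
    rcases ih with ih | ih
    · left
      have hm := ih.med hb hs hg
      have h2 := step_c_ge hg d
      have h2' : (2:ℝ) * T.c ≤ (step d T).c := by exact_mod_cast h2
      have h3 : (5:ℝ) ≤ T.c := by exact_mod_cast hg.hc
      have := ih.hc
      constructor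
      · cases d
        · simpa [step] using hm
        · exact ih.hp
      · cases d
        · exact ih.hq
        · simpa [step] using hm
      · linarith
    · have hm := ih.med hg
      cases d
      · right
        obtain ⟨hb', hq, X, hX, hlX, hE⟩ := ih
        have hc' : (1:ℝ) ≤ c := by exact_mod_cast hb
        have hEp := E_pos (x := 3 * c) (by linarith)
        have hE2 := E_eq (x := 3 * c) (by linarith)
        refine ⟨hb', hq, X * E (3 * c), by positivity, ?_, ?_⟩
        · rw [Real.log_mul (by positivity) (by positivity), hlX]
          subst hb'
          change _ + N T.b = _
          rw [← hq]
          simp only [step]; push_cast; ring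
        · simp only [step]; push_cast
          rw [hb']
          have : (3:ℝ) * (3 * T.c * c - T.a) = 3 * T.c * (E (3 * c) + 1 / E (3 * c)) - 3 * T.a := by
            rw [hE2]; ring
          rw [this]
          have : X * E (3 * c) * (E (3 * c) - 1 / E (3 * c)) = E (3 * c) * (3 * T.c - 3 * T.a / E (3 * c)) := by
            rw [← hE]; ring
          rw [this]; field_simp; ring
      · left
        constructor
        · exact hm.1
        · simpa [step] using hm.2
        · simp only [step]; push_cast
          obtain ⟨h1, h2, h3, h4, h5⟩ := hg
          have hh := ih.hb
          have h1' : (1:ℝ) ≤ T.a := by exact_mod_cast h1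
          have h2' : (1:ℝ) ≤ T.b := by exact_mod_cast h2
          have h4' : (2:ℝ) * T.a * T.b ≤ T.c := by exact_mod_cast h4
          have : (T.b : ℝ) = c := by exact_mod_cast hh
          rw [← this]
          have e1 : (T.b:ℝ) ≤ T.a * T.b := by nlinarith
          have e2 : (T.c:ℝ) ≤ T.a * T.c := by nlinarith
          linarith

/-- All descendants of `S` lie above `l, m` by `s`. -/
lemma fan_med {l m s : ℝ} {S : St} (h : Good S) (hs : 2 / (9 * (S.b:ℝ) ^ 2) ≤ s)
    (hJ : J2 l m s S.b S) (r : List Bool) :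
    l * ((run S r).p1 + (run S r).q1) + m * ((run S r).p2 + (run S r).q2) + s ≤ N (run S r).c := by
  rcases fan h hs hJ r with h1 | h1
  · exact h1.med h.hb hs (h.run r)
  · exact (h1.med (h.run r)).2


structure Geo (S : St) : Prop where
  p1 : 0 ≤ S.p1
  p2 : 0 ≤ S.p2
  q1 : 0 ≤ S.q1
  q2 : 0 ≤ S.q2
  det : S.p1 * S.q2 - S.p2 * S.q1 = 1
  sa : ((S.p1 : ℝ) + S.p2) * Real.log 2 ≤ Real.log (2 * S.a)
  sb : ((S.q1 : ℝ) + S.q2) * Real.log 2 ≤ Real.log (2 * S.b)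

lemma Geo.sc {S : St} (h : Geo S) (hg : Good S) :
    ((S.p1 : ℝ) + S.q1 + (S.p2 + S.q2)) * Real.log 2 ≤ Real.log (2 * S.c) := by
  have h1 : (1:ℝ) ≤ S.a := by exact_mod_cast hg.ha
  have h2 : (1:ℝ) ≤ S.b := by exact_mod_cast hg.hb
  have h4 : (2:ℝ) * S.a * S.b ≤ S.c := by exact_mod_cast hg.h2
  have : Real.log (2 * S.a) + Real.log (2 * S.b) ≤ Real.log (2 * S.c) := by
    rw [← Real.log_mul (by positivity) (by positivity)]
    exact Real.log_le_log (by positivity) (by linarith)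
  have := h.sa
  have := h.sb
  linarith

lemma geo_run {S : St} (h : Geo S) (hg : Good S) (r : List Bool) : Geo (run S r) := by
  induction r with
  | nil => exact h
  | cons d r ih =>
    have hg' := hg.run r
    simp only [run]
    generalize run S r = T at *
    have hs := ih.sc hg'
    obtain ⟨h1, h2, h3, h4, h5, h6, h7⟩ := ih
    cases d <;> constructor <;> simp only [step] <;> push_cast <;>
      first | assumption | linarith | nlinarith

lemma geo_root : Geo root := by
  constructor <;> norm_num [root]
  exact Real.log_le_log (by norm_num) (by norm_num)

def st (w : List Bool) : St := run root w

lemma good_st (w : List Bool) : Good (st w) := good_root.run w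
lemma geo_st (w : List Bool) : Geo (st w) := geo_run geo_root good_root w

def v1 (S : St) : ℤ := S.p1 + S.q1
def v2 (S : St) : ℤ := S.p2 + S.q2

lemma desc (S : St) (r : List Bool) : ∃ x1 y1 x2 y2 : ℤ, 0 ≤ x1 ∧ 0 ≤ y1 ∧ 0 ≤ x2 ∧ 0 ≤ y2 ∧
    1 ≤ x1 + x2 ∧ 1 ≤ y1 + y2 ∧ (run S r).p1 = x1 * S.p1 + y1 * S.q1 ∧
    (run S r).p2 = x1 * S.p2 + y1 * S.q2 ∧ (run S r).q1 = x2 * S.p1 + y2 * S.q1 ∧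
    (run S r).q2 = x2 * S.p2 + y2 * S.q2 := by
  induction r with
  | nil => exact ⟨1, 0, 0, 1, by simp [run]⟩
  | cons d r ih =>
    obtain ⟨x1, y1, x2, y2, h1, h2, h3, h4, h5, h6, e1, e2, e3, e4⟩ := ih
    cases d
    · refine ⟨x1 + x2, y1 + y2, x2, y2, by omega, by omega, h3, h4, by omega, by omega, ?_⟩
      simp only [run, step, e1, e2, e3, e4]
      refine ⟨?_, ?_, ?_, ?_⟩ <;> first | trivial | ring
    · refine ⟨x1, y1, x1 + x2, y1 + y2, h1, h2, by omega, by omega, by omega, by omega, ?_⟩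
      simp only [run, step, e1, e2, e3, e4]
      refine ⟨?_, ?_, ?_, ?_⟩ <;> first | trivial | ring

lemma desc_v (S : St) (r : List Bool) : ∃ x y : ℤ, 1 ≤ x ∧ 1 ≤ y ∧
    v1 (run S r) = x * S.p1 + y * S.q1 ∧ v2 (run S r) = x * S.p2 + y * S.q2 := by
  obtain ⟨x1, y1, x2, y2, h1, h2, h3, h4, h5, h6, e1, e2, e3, e4⟩ := desc S r
  refine ⟨x1 + x2, y1 + y2, h5, h6, ?_, ?_⟩
  · simp only [v1, e1, e3]; ring
  · simp only [v2, e2, e4]; ring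

lemma v_pos (w : List Bool) : 1 ≤ v1 (st w) ∧ 1 ≤ v2 (st w) := by
  obtain ⟨x, y, hx, hy, e1, e2⟩ := desc_v root w
  simp [root] at e1 e2
  unfold st root
  rw [e1, e2]; exact ⟨hx, hy⟩

lemma inj_pq (w w' : List Bool) (h1 : (st w).p1 = (st w').p1) (h2 : (st w).p2 = (st w').p2)
    (h3 : (st w).q1 = (st w').q1) (h4 : (st w).q2 = (st w').q2) : w = w' := by
  induction w generalizing w' with
  | nil =>
    cases w' with
    | nil => rfl
    | cons d u =>
      exfalso
      obtain ⟨g1, g2, g3, g4, g5, -, -⟩ := geo_st u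
      cases d <;> simp only [st, run, step, root] at * <;> nlinarith
  | cons d u ih =>
    obtain ⟨g1, g2, g3, g4, g5, -, -⟩ := geo_st u
    cases w' with
    | nil =>
      exfalso
      cases d <;> simp only [st, run, step, root] at * <;> nlinarith
    | cons d' u' =>
      obtain ⟨k1, k2, k3, k4, k5, -, -⟩ := geo_st u'
      cases d <;> cases d' <;> simp only [st, run, step] at *
      · rw [ih u' (by omega) (by omega) (by omega) (by omega)]
      · exfalso
        have : (run root u).p1 = 0 := by omega
        have : (run root u).p2 = 0 := by omega
        simp_all
      · exfalso
        have : (run root u).q1 = 0 := by omega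
        have : (run root u).q2 = 0 := by omega
        simp_all
      · rw [ih u' (by omega) (by omega) (by omega) (by omega)]

lemma inj_v (w w' : List Bool) (h1 : v1 (st w) = v1 (st w')) (h2 : v2 (st w) = v2 (st w')) :
    w = w' := by
  obtain ⟨g1, g2, g3, g4, g5, -, -⟩ := geo_st w
  obtain ⟨k1, k2, k3, k4, k5, -, -⟩ := geo_st w'
  have hv := v_pos w
  have hv' := v_pos w'
  unfold v1 v2 at *
  generalize hS : st w = S at *
  generalize hS' : st w' = S' at *
  set k := S.q1 * S'.p2 - S.q2 * S'.p1 + 1 with hk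
  have d : S.p1 * S'.p2 - S.p2 * S'.p1 = S'.p2 * (S'.p1 + S'.q1) - S'.p1 * (S'.p2+S'.q2) +
     S.p1 * S'.p2 - S.p2 * S'.p1 + 1 := by linarith
  obtain ⟨k, hk1, hk2⟩ : ∃ k : ℤ, S'.p1 = S.p1 + k * (S.p1 + S.q1) ∧
      S'.p2 = S.p2 + k * (S.p2 + S.q2) := by
    have key : S'.p1 * (S.p2 + S.q2) - S'.p2 * (S.p1 + S.q1) = 1 := by
      rw [h1, h2]; linarith
    refine ⟨S.p1 * S'.p2 - S.p2 * S'.p1, ?_, ?_⟩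
    · linear_combination S.p1 * key - S'.p1 * g5
    · linear_combination S.p2 * key - S'.p2 * g5
  have hk0 : k = 0 := by
    by_contra hne
    rcases lt_or_gt_of_ne hne with h | h
    · have a1 : S.p1 ≥ (S.p1 + S.q1) := by nlinarith
      have a2 : S.p2 ≥ (S.p2 + S.q2) := by nlinarith
      have : S.q1 = 0 := by omega
      have : S.q2 = 0 := by omega
      simp_all
    · have a1 : S'.p1 ≥ S.p1 + (S.p1 + S.q1) := by nlinarith
      have a2 : S'.p2 ≥ S.p2 + (S.p2 + S.q2) := by nlinarith
      have : S.p1 = 0 := by omega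
      have : S.p2 = 0 := by omega
      simp_all
  subst hk0
  refine inj_pq w w' ?_ ?_ ?_ ?_ <;> rw [hS, hS'] <;> omega

def D (S T : St) : ℤ := v1 S * v2 T - v2 S * v1 T

lemma D_ne {w w' : List Bool} (h : w ≠ w') : D (st w) (st w') ≠ 0 := by
  intro h0
  apply h
  have g := (geo_st w).det
  have k := (geo_st w').det
  have hv := v_pos w
  have hv' := v_pos w'
  have e1 : (st w).p1 * v2 (st w) - (st w).p2 * v1 (st w) = 1 := by unfold v1 v2; linarith
  have e2 : (st w').p1 * v2 (st w') - (st w').p2 * v1 (st w') = 1 := by unfold v1 v2; linarith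
  unfold D at h0
  generalize hi : (st w).p1 * v2 (st w') - (st w).p2 * v1 (st w') = i
  generalize hj : (st w').p1 * v2 (st w) - (st w').p2 * v1 (st w) = j
  have a1 : v1 (st w) * i = v1 (st w') := by
    rw [← hi]; linear_combination (st w).p1 * h0 + v1 (st w') * e1
  have a2 : v2 (st w) * i = v2 (st w') := by
    rw [← hi]; linear_combination (st w).p2 * h0 + v2 (st w') * e1
  have b1 : v1 (st w') * j = v1 (st w) := by
    rw [← hj]; linear_combination -(st w').p1 * h0 + v1 (st w) * e2
  have hij : i * j = 1 := by
    have : v1 (st w) * (i * j) = v1 (st w) * 1 := by rw [← mul_assoc, a1, b1, mul_one]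
    exact mul_left_cancel₀ (by omega) this
  have hi0 : 0 < i := by
    by_contra hc
    push Not at hc
    nlinarith
  have : i = 1 := by
    rcases Int.eq_one_or_neg_one_of_mul_eq_one hij with h | h <;> omega
  subst this
  exact inj_v w w' (by omega) (by omega)

lemma tri (w w' : List Bool) : w <:+ w' ∨
    0 ≤ v1 (st w') * (st w).p2 - v2 (st w') * (st w).p1 ∧ True ∨
    0 ≤ (st w).q1 * v2 (st w') - (st w).q2 * v1 (st w') := by
  induction w with
  | nil => left; exact List.nil_suffix
  | cons d u ih =>
    have g := (geo_st u).det
    rcases ih with ih | ih | ih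
    · obtain ⟨r, rfl⟩ := ih
      rcases List.eq_nil_or_concat r with rfl | ⟨r', d', rfl⟩
      · right
        cases d
        · left
          simp only [st, run, step, v1, v2, List.nil_append]
          refine ⟨?_, trivial⟩
          linarith
        · right
          simp only [st, run, step, v1, v2, List.nil_append]
          linarith
      · by_cases hd : d = d'
        · left
          subst hd
          exact ⟨r', by simp⟩
        · right
          have e : st (r'.concat d' ++ u) = run (step d' (st u)) r' := by
            rw [List.concat_eq_append, List.append_assoc]
            simp only [st]
            rw [run_append]; rfl
          rw [e]
          obtain ⟨x, y, hx, hy, e1, e2⟩ := desc_v (step d' (st u)) r'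
          rw [e1, e2]
          cases d <;> cases d' <;> simp only [st, run, step, not_true_eq_false] at *
          · left
            refine ⟨?_, trivial⟩
            nlinarith
          · right
            nlinarith
    · right
      cases d
      · simp only [st, run, step] at *
        by_contra hc
        push Not at hc
        obtain ⟨hc1, hc2⟩ := hc
        have := hc1
        simp only [not_true_eq_false, imp_false, not_le] at this
        linarith
      · left; exact ih
    · right
      cases d
      · right; exact ih
      · simp only [st, run, step] at *
        by_contra hc
        push Not at hc
        obtain ⟨hc1, hc2⟩ := hc
        have := hc1
        simp only [not_true_eq_false, imp_false, not_le] at this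
        linarith


lemma N_pos {c : ℤ} (hc : 1 ≤ c) : 0 < N c := by
  have : (1:ℝ) ≤ c := by exact_mod_cast hc
  have := E_half (x := 3 * (c:ℝ))
  exact Real.log_pos (by linarith)

lemma exists_ell {S : St} (h : Good S) (hd : S.p1 * S.q2 - S.p2 * S.q1 = 1) :
    ∃ l m s : ℝ, 0 < s ∧ l * v1 S + m * v2 S = N S.c ∧ l * S.p1 + m * S.p2 + s ≤ N S.a ∧
      l * S.q1 + m * S.q2 + s ≤ N S.b ∧
      ∀ d r, l * v1 (run (step d S) r) + m * v2 (run (step d S) r) + s ≤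
        N (run (step d S) r).c := by
  have h1' : (1:ℝ) ≤ S.a := by exact_mod_cast h.ha
  have h2' : (1:ℝ) ≤ S.b := by exact_mod_cast h.hb
  have h3' : (5:ℝ) ≤ S.c := by exact_mod_cast h.hc
  have h4' : (2:ℝ) * S.a * S.b ≤ S.c := by exact_mod_cast h.h2
  have h5' : (S.a:ℝ) ^ 2 + S.b ^ 2 + S.c ^ 2 = 3 * S.a * S.b * S.c := by exact_mod_cast h.hm
  have hd' : (S.p1:ℝ) * S.q2 - S.p2 * S.q1 = 1 := by exact_mod_cast hd
  have hE1 := E_ge (x := 3 * (S.c:ℝ)) (by linarith)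
  have hE2 := E_eq (x := 3 * (S.c:ℝ)) (by linarith)
  have hNc : N S.c = Real.log (E (3 * S.c)) := rfl
  set e := E (3 * (S.c:ℝ)) with he
  have hep : 14 ≤ e := by linarith
  set f := 1 / e with hf
  have hef : e * f = 1 := by rw [hf]; field_simp
  have hfp : 0 < f := by positivity
  have hdp : 0 < e - f := by nlinarith
  set s := Real.log (9 * (S.c:ℝ) ^ 2 / (9 * (S.c:ℝ) ^ 2 - 4)) / 2 with hs
  have hcc : 0 < 9 * (S.c:ℝ) ^ 2 - 4 := by nlinarith
  have hs1 : 2 / (9 * (S.c:ℝ) ^ 2) ≤ s := by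
    have := Real.one_sub_inv_le_log_of_pos (x := 9 * (S.c:ℝ) ^ 2 / (9 * (S.c:ℝ) ^ 2 - 4))
      (by positivity)
    have e1 : 1 - (9 * (S.c:ℝ) ^ 2 / (9 * (S.c:ℝ) ^ 2 - 4))⁻¹ = 2 * (2 / (9 * (S.c:ℝ) ^ 2)) := by
      field_simp; ring
    rw [e1] at this
    linarith
  have hs0 : 0 < s := lt_of_lt_of_le (by positivity) hs1
  have hec : (S.c:ℝ) ≤ e := by linarith
  have hn1 : 0 < S.a * e - S.b := by
    nlinarith [mul_le_mul h1' hec (by linarith) (by linarith)]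
  have hn2 : 0 < S.b * e - S.a := by
    nlinarith [mul_le_mul h2' hec (by linarith) (by linarith)]
  set X := 3 * (S.a * e - S.b) / (e - f) with hX
  set Y := 3 * (S.b * e - S.a) / (e - f) with hY
  have hXp : 0 < X := by positivity
  have hYp : 0 < Y := by positivity
  have hd2 : (e - f) ^ 2 = 9 * (S.c:ℝ) ^ 2 - 4 := by
    linear_combination (e + f + 3 * S.c) * hE2 - 4 * hef
  have hXY : X * Y = e * (9 * (S.c:ℝ) ^ 2 / (9 * (S.c:ℝ) ^ 2 - 4)) := by
    rw [← hd2, hX, hY]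
    field_simp
    have e3 : e ^ 2 + 1 = 3 * S.c * e := by linear_combination e * hE2 - hef
    linear_combination 9 * (S.a * S.b : ℝ) * e3 - 9 * e * h5'
  have hlog : Real.log X + Real.log Y = N S.c + 2 * s := by
    rw [← Real.log_mul hXp.ne' hYp.ne', hXY, Real.log_mul (by positivity) (by positivity), hNc, hs]
    ring
  set lp := Real.log X - s with hlp
  set lq := Real.log Y - s with hlq
  set l := lp * S.q2 - lq * S.p2 with hl
  set m := lq * S.p1 - lp * S.q1 with hm
  have elp : l * S.p1 + m * S.p2 = lp := by
    rw [hl, hm]; linear_combination lp * hd'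
  have elq : l * S.q1 + m * S.q2 = lq := by
    rw [hl, hm]; linear_combination lq * hd'
  have hv : l * (S.p1 + S.q1) + m * (S.p2 + S.q2) = N S.c := by linarith
  have JL : J2 l m s S.c (step true S) := by
    refine ⟨rfl, ?_, X, hXp, ?_, ?_⟩
    · simp only [step]; push_cast; exact hv
    · simp only [step]; rw [elp, hlp]; ring
    · simp only [step]; push_cast
      rw [← he, ← hf]
      have : X * (e - f) = 3 * (S.a * e - S.b) := by rw [hX]; field_simp
      rw [this, div_eq_mul_one_div, ← hf]
      linear_combination 3 * S.a * hE2
  have JR : J2 l m s S.c (swap (step false S)) := by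
    refine ⟨rfl, ?_, Y, hYp, ?_, ?_⟩
    · simp only [step, swap]; push_cast; exact hv
    · simp only [step, swap]; rw [elq, hlq]; ring
    · simp only [step, swap]; push_cast
      rw [← he, ← hf]
      have : Y * (e - f) = 3 * (S.b * e - S.a) := by rw [hY]; field_simp
      rw [this, div_eq_mul_one_div, ← hf]
      linear_combination 3 * S.b * hE2
  refine ⟨l, m, s, hs0, ?_, ?_, ?_, ?_⟩
  · unfold v1 v2; push_cast; exact hv
  · exact (JL.med (h.step true)).1
  · exact (JR.med (h.step false).swap).1
  · intro d r
    cases d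
    · have := fan_med (l := l) (m := m) (s := s) (S := swap (step false S))
        (h.step false).swap hs1 JR (r.map (!·))
      rw [← swap_run] at this
      simp only [swap] at this
      unfold v1 v2; push_cast
      linarith
    · have := fan_med (l := l) (m := m) (s := s) (S := step true S)
        (h.step true) hs1 JL r
      unfold v1 v2; push_cast
      linarith

def Conv (w : List Bool) : Prop := ∃ l m : ℝ, l * v1 (st w) + m * v2 (st w) = N (st w).c ∧
  ∀ w', w' ≠ w → l * v1 (st w') + m * v2 (st w') < N (st w').c

def Anc (i j a : ℤ) : Prop := ∃ u, v1 (st u) = i ∧ v2 (st u) = j ∧ (st u).c = a ∧ Conv u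

lemma lin_aux {x y x' y' l m l' m' : ℝ} {i j : ℝ}
    (hp : l * x + m * y < l' * x + m' * y)
    (hw : l' * x' + m' * y' ≤ l * x' + m * y')
    (hd : x * y' - y * x' = 1) (hx : 0 ≤ x) (hx' : 0 ≤ x') (hi : 0 < i) (hj : 0 < i * y - j * x) :
    l * i + m * j < l' * i + m' * j := by
  have e1 : (i * y' - j * x') * x - (i * y - j * x) * x' = i := by linear_combination i * hd
  have e2 : (i * y' - j * x') * y - (i * y - j * x) * y' = j := by linear_combination j * hd
  have hi' : 0 < i * y' - j * x' := by
    by_contra hc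
    push Not at hc
    nlinarith [mul_nonneg (neg_nonneg.2 hc) hx, mul_nonneg hj.le hx']
  generalize i * y' - j * x' = A at *
  generalize i * y - j * x = B at *
  rw [← e1, ← e2]
  nlinarith [mul_lt_mul_of_pos_left hp hi', mul_le_mul_of_nonneg_left hw hj.le]

lemma conv_of (w : List Bool)
    (hp : ((st w).p1 = 1 ∧ (st w).p2 = 0) ∨ Anc (st w).p1 (st w).p2 (st w).a)
    (hq : ((st w).q1 = 0 ∧ (st w).q2 = 1) ∨ Anc (st w).q1 (st w).q2 (st w).b) : Conv w := by
  have hg := geo_st w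
  obtain ⟨l, m, s, hs, hv, hpa, hqb, hr⟩ := exists_ell (good_st w) hg.det
  refine ⟨l, m, hv, ?_⟩
  intro w' hne
  have hvp := v_pos w'
  have hvw := v_pos w
  have hvp1 : (1:ℝ) ≤ v1 (st w') := by exact_mod_cast hvp.1
  have hvp2 : (1:ℝ) ≤ v2 (st w') := by exact_mod_cast hvp.2
  have hvw1 : (1:ℝ) ≤ v1 (st w) := by exact_mod_cast hvw.1
  have hvw2 : (1:ℝ) ≤ v2 (st w) := by exact_mod_cast hvw.2
  rcases tri w w' with h | ⟨h, -⟩ | h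
  · obtain ⟨r, rfl⟩ := h
    rcases List.eq_nil_or_concat r with rfl | ⟨r', d', rfl⟩
    · simp at hne
    · have e : st (r'.concat d' ++ w) = run (step d' (st w)) r' := by
        rw [List.concat_eq_append, List.append_assoc]
        simp only [st]
        rw [run_append]; rfl
      rw [e]
      have := hr d' r'
      linarith
  · rcases hp with ⟨h1, h2⟩ | ⟨u, h1, h2, h3, l', m', h4, h5⟩
    · rw [h1, h2] at h
      exfalso; linarith
    · by_cases hu : w' = u
      · subst hu
        rw [h1, h2, h3]; linarith
      · have hD := D_ne hu
        unfold D at hD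
        rw [h1, h2] at hD
        have hpos : 0 < v1 (st w') * (st w).p2 - v2 (st w') * (st w).p1 := lt_of_le_of_ne h hD.symm
        have hwu : w ≠ u := by
          rintro rfl
          have g := hg.det
          have k1 : (st w).q1 = 0 := by unfold v1 at h1; linarith
          have k2 : (st w).q2 = 0 := by unfold v2 at h2; linarith
          rw [k1, k2] at g; simp at g
        have h6 := h5 w hwu
        have h7 := h5 w' hu
        rw [h1, h2, h3] at h4
        refine lt_trans (lin_aux (x := (st w).p1) (y := (st w).p2) (x' := v1 (st w))
          (y' := v2 (st w)) (l' := l') (m' := m') ?_ ?_ ?_ ?_ ?_ ?_ ?_) h7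
        · linarith
        · linarith
        · have : (st w).p1 * v2 (st w) - (st w).p2 * v1 (st w) = 1 := by
            have := hg.det
            unfold v1 v2; linarith
          exact_mod_cast this
        · exact_mod_cast hg.p1
        · linarith
        · linarith
        · exact_mod_cast hpos
  · rcases hq with ⟨h1, h2⟩ | ⟨u, h1, h2, h3, l', m', h4, h5⟩
    · rw [h1, h2] at h
      exfalso; linarith
    · by_cases hu : w' = u
      · subst hu
        rw [h1, h2, h3]; linarith
      · have hD := D_ne (Ne.symm hu)
        unfold D at hD
        rw [h1, h2] at hD
        have hpos : 0 < v2 (st w') * (st w).q1 - v1 (st w') * (st w).q2 := by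
          have := lt_of_le_of_ne h hD.symm
          linarith
        have hwu : w ≠ u := by
          rintro rfl
          have g := hg.det
          have k1 : (st w).p1 = 0 := by unfold v1 at h1; linarith
          have k2 : (st w).p2 = 0 := by unfold v2 at h2; linarith
          rw [k1, k2] at g; simp at g
        have h6 := h5 w hwu
        have h7 := h5 w' hu
        rw [h1, h2, h3] at h4
        have := lin_aux (x := (st w).q2) (y := (st w).q1) (x' := v2 (st w))
          (y' := v1 (st w)) (l := m) (m := l) (l' := m') (m' := l') (i := v2 (st w'))
          (j := v1 (st w')) (by linarith) (by linarith) (by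
            have : (st w).q2 * v1 (st w) - (st w).q1 * v2 (st w) = 1 := by
              have := hg.det
              unfold v1 v2; linarith
            exact_mod_cast this) (by exact_mod_cast hg.q2) (by linarith) (by linarith)
            (by exact_mod_cast hpos)
        linarith

lemma conv_all (w : List Bool) :
    (((st w).p1 = 1 ∧ (st w).p2 = 0) ∨ Anc (st w).p1 (st w).p2 (st w).a) ∧
    (((st w).q1 = 0 ∧ (st w).q2 = 1) ∨ Anc (st w).q1 (st w).q2 (st w).b) := by
  induction w with
  | nil => simp [st, run, root]
  | cons d u ih =>
    have hc := conv_of u ih.1 ih.2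
    have ha : Anc (v1 (st u)) (v2 (st u)) (st u).c := ⟨u, rfl, rfl, rfl, hc⟩
    cases d
    · exact ⟨Or.inr ha, ih.2⟩
    · exact ⟨ih.1, Or.inr ha⟩

lemma conv (w : List Bool) : Conv w := conv_of w (conv_all w).1 (conv_all w).2

lemma noncol1 {w1 w2 w3 : List Bool} {m : ℤ} (h1 : (st w1).c = m) (h2 : (st w2).c = m)
    (h3 : (st w3).c = m) (h12 : w1 ≠ w2) (h23 : w3 ≠ w2)
    (d12 : 0 < D (st w1) (st w2)) (d23 : 0 < D (st w2) (st w3)) :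
    0 < D (st w1) (st w2) + D (st w2) (st w3) + D (st w3) (st w1) := by
  obtain ⟨l, k, he, hlt⟩ := conv w2
  have e1 := hlt w1 h12
  have e3 := hlt w3 h23
  rw [h2] at he
  rw [h1] at e1
  rw [h3] at e3
  have hm : 0 < N m := by rw [← h1]; exact N_pos (by have := (good_st w1).hc; omega)
  have d12' : (0:ℝ) < D (st w1) (st w2) := by exact_mod_cast d12
  have d23' : (0:ℝ) < D (st w2) (st w3) := by exact_mod_cast d23
  have f1 := mul_lt_mul_of_pos_left e1 d23'
  have f3 := mul_lt_mul_of_pos_left e3 d12'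
  have key : (0:ℝ) < (D (st w1) (st w2) + D (st w2) (st w3) + D (st w3) (st w1) : ℤ) * N m := by
    have : (D (st w2) (st w3) : ℝ) * (l * v1 (st w1) + k * v2 (st w1)) +
      D (st w1) (st w2) * (l * v1 (st w3) + k * v2 (st w3)) +
      D (st w3) (st w1) * (l * v1 (st w2) + k * v2 (st w2)) = 0 := by
      unfold D; push_cast; ring
    rw [he] at this
    push_cast
    nlinarith
  have := (mul_pos_iff_of_pos_right hm).1 key
  exact_mod_cast this

lemma D_anti (S T : St) : D T S = - D S T := by unfold D; ring

lemma noncol {w1 w2 w3 : List Bool} {m : ℤ} (h1 : (st w1).c = m) (h2 : (st w2).c = m)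
    (h3 : (st w3).c = m) (h12 : w1 ≠ w2) (h23 : w2 ≠ w3) (h13 : w1 ≠ w3) :
    D (st w1) (st w2) + D (st w2) (st w3) + D (st w3) (st w1) ≠ 0 := by
  have a := D_anti (st w1) (st w2)
  have b := D_anti (st w2) (st w3)
  have c := D_anti (st w3) (st w1)
  have n123 := noncol1 h1 h2 h3 h12 h23.symm
  have n321 := noncol1 h3 h2 h1 h23.symm h12
  have n312 := noncol1 h3 h1 h2 h13.symm h12.symm
  have n132 := noncol1 h1 h3 h2 h13 h23
  have n231 := noncol1 h2 h3 h1 h23 h13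
  have n213 := noncol1 h2 h1 h3 h12.symm h13.symm
  have z1 := D_ne h12
  have z2 := D_ne h23
  have z3 := D_ne h13.symm
  omega

lemma near {S : St} (h : Good S) (hd : Geo S) :
    ∃ l m : ℝ, ∀ r, |N (run S r).c - (l * v1 (run S r) + m * v2 (run S r))| ≤
      ((v1 (run S r) : ℝ) + v2 (run S r)) * (1 / (S.c:ℝ) ^ 2) := by
  have hd' : (S.p1:ℝ) * S.q2 - S.p2 * S.q1 = 1 := by exact_mod_cast hd.det
  have hc5 : (5:ℝ) ≤ S.c := by exact_mod_cast h.hc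
  set δ := 1 / (S.c:ℝ) ^ 2 with hδ
  have hδ0 : 0 < δ := by positivity
  refine ⟨N S.a * S.q2 - N S.b * S.p2, N S.b * S.p1 - N S.a * S.q1, ?_⟩
  set l := N S.a * S.q2 - N S.b * S.p2 with hl
  set m := N S.b * S.p1 - N S.a * S.q1 with hm
  have elp : l * S.p1 + m * S.p2 = N S.a := by
    rw [hl, hm]; linear_combination N S.a * hd'
  have elq : l * S.q1 + m * S.q2 = N S.b := by
    rw [hl, hm]; linear_combination N S.b * hd'
  have inv : ∀ r, (S.c ≤ (run S r).c) ∧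
      0 ≤ l * (run S r).p1 + m * (run S r).p2 - N (run S r).a ∧
      0 ≤ l * (run S r).q1 + m * (run S r).q2 - N (run S r).b ∧
      l * (run S r).p1 + m * (run S r).p2 - N (run S r).a ≤
        ((run S r).p1 + (run S r).p2 - 1) * δ ∧
      l * (run S r).q1 + m * (run S r).q2 - N (run S r).b ≤
        ((run S r).q1 + (run S r).q2 - 1) * δ := by
    intro r
    induction r with
    | nil =>
      simp only [run]
      rw [elp, elq]
      obtain ⟨g1, g2, g3, g4, g5, -, -⟩ := hd
      have k1 : 1 ≤ S.p1 + S.p2 := by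
        by_contra hc
        have k1 : S.p1 = 0 := by omega
        have k2 : S.p2 = 0 := by omega
        rw [k1, k2] at g5; simp at g5
      have k2 : 1 ≤ S.q1 + S.q2 := by
        by_contra hc
        have k1 : S.q1 = 0 := by omega
        have k2 : S.q2 = 0 := by omega
        rw [k1, k2] at g5; simp at g5
      have k1' : (1:ℝ) ≤ S.p1 + S.p2 := by exact_mod_cast k1
      have k2' : (1:ℝ) ≤ S.q1 + S.q2 := by exact_mod_cast k2
      refine ⟨le_refl _, by simp, by simp, ?_, ?_⟩
      · rw [sub_self]; exact mul_nonneg (by linarith) hδ0.le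
      · rw [sub_self]; exact mul_nonneg (by linarith) hδ0.le
    | cons d r ih =>
      have hg := h.run r
      simp only [run]
      generalize run S r = T at *
      obtain ⟨i1, i2, i3, i4, i5⟩ := ih
      have hst := step_c_ge hg d
      have hdf := hg.defect
      have i1' : (S.c:ℝ) ≤ T.c := by exact_mod_cast i1
      have hle : 1 / (T.c:ℝ) ^ 2 ≤ δ := by rw [hδ]; gcongr
      refine ⟨by have := hg.hc; omega, ?_⟩
      cases d <;> simp only [step] <;> push_cast
      · refine ⟨by linarith, i3, by linarith, i5⟩
      · refine ⟨i2, by linarith, i4, by linarith⟩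
  intro r
  obtain ⟨i1, i2, i3, i4, i5⟩ := inv r
  have hdf := (h.run r).defect
  have i1' : (S.c:ℝ) ≤ (run S r).c := by exact_mod_cast i1
  have hle : 1 / ((run S r).c:ℝ) ^ 2 ≤ δ := by rw [hδ]; gcongr
  rw [abs_sub_comm, abs_le]
  unfold v1 v2
  push_cast
  have : 0 ≤ l * (run S r).p1 + m * (run S r).p2 - N (run S r).a +
    (l * (run S r).q1 + m * (run S r).q2 - N (run S r).b) +
    (N (run S r).a + N (run S r).b - N (run S r).c) := by linarith [hdf.1]
  constructor <;> linarith

lemma three {w0 r1 r2 r3 : List Bool} {m : ℤ} {n : ℝ}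
    (h1 : (st (r1 ++ w0)).c = m) (h2 : (st (r2 ++ w0)).c = m)
    (h3 : (st (r3 ++ w0)).c = m) (h12 : r1 ++ w0 ≠ r2 ++ w0) (h23 : r2 ++ w0 ≠ r3 ++ w0)
    (h13 : r1 ++ w0 ≠ r3 ++ w0)
    (hn : ∀ w, (st w).c = m → (v1 (st w) : ℝ) + v2 (st w) ≤ n)
    (hlt : 3 * (n ^ 2 * (n * (1 / ((st w0).c:ℝ) ^ 2))) < N m) : False := by
  have hF := noncol h1 h2 h3 h12 h23 h13
  obtain ⟨l, k, hlk⟩ := near (good_st w0) (geo_st w0)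
  have e : ∀ r, st (r ++ w0) = run (st w0) r := fun r => run_append root r w0
  set δ := 1 / ((st w0).c:ℝ) ^ 2 with hδ
  have hδ0 : 0 ≤ δ := by positivity
  have hb : ∀ r, (st (r ++ w0)).c = m →
      |N m - (l * v1 (st (r ++ w0)) + k * v2 (st (r ++ w0)))| ≤ n * δ := by
    intro r hr
    have h4 := hlk r
    rw [← e r] at h4
    have h5 := hn _ hr
    rw [hr] at h4
    exact h4.trans (by gcongr)
  have hDb : ∀ w w', (st w).c = m → (st w').c = m → |(D (st w) (st w') : ℝ)| ≤ n ^ 2 := by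
    intro w w' hw hw'
    have a1 := hn w hw
    have a2 := hn w' hw'
    have b1 := v_pos w
    have b2 := v_pos w'
    have c1 : (1:ℝ) ≤ v1 (st w) := by exact_mod_cast b1.1
    have c2 : (1:ℝ) ≤ v2 (st w) := by exact_mod_cast b1.2
    have c3 : (1:ℝ) ≤ v1 (st w') := by exact_mod_cast b2.1
    have c4 : (1:ℝ) ≤ v2 (st w') := by exact_mod_cast b2.2
    unfold D
    push_cast
    generalize (v1 (st w) : ℝ) = x at *
    generalize (v2 (st w) : ℝ) = y at *
    generalize (v1 (st w') : ℝ) = x' at *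
    generalize (v2 (st w') : ℝ) = y' at *
    have t1 : x * y' ≤ n * n := mul_le_mul (by linarith) (by linarith) (by linarith) (by linarith)
    have t2 : y * x' ≤ n * n := mul_le_mul (by linarith) (by linarith) (by linarith) (by linarith)
    have t3 : 0 ≤ x * y' := mul_nonneg (by linarith) (by linarith)
    have t4 : 0 ≤ y * x' := mul_nonneg (by linarith) (by linarith)
    rw [abs_le]; constructor <;> nlinarith
  have f1 := hb r1 h1
  have f2 := hb r2 h2
  have f3 := hb r3 h3
  have g12 := hDb _ _ h1 h2
  have g23 := hDb _ _ h2 h3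
  have g31 := hDb _ _ h3 h1
  have key : ((D (st (r1 ++ w0)) (st (r2 ++ w0)) + D (st (r2 ++ w0)) (st (r3 ++ w0)) +
      D (st (r3 ++ w0)) (st (r1 ++ w0)) : ℤ) : ℝ) * N m =
      D (st (r2 ++ w0)) (st (r3 ++ w0)) * (N m - (l * v1 (st (r1 ++ w0)) + k * v2 (st (r1 ++ w0)))) +
      D (st (r1 ++ w0)) (st (r2 ++ w0)) * (N m - (l * v1 (st (r3 ++ w0)) + k * v2 (st (r3 ++ w0)))) +
      D (st (r3 ++ w0)) (st (r1 ++ w0)) * (N m - (l * v1 (st (r2 ++ w0)) + k * v2 (st (r2 ++ w0)))) := by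
    unfold D; push_cast; ring
  have hN : 0 < N m := by rw [← h1]; exact N_pos (by have := (good_st (r1 ++ w0)).hc; omega)
  have hge : N m ≤ |((D (st (r1 ++ w0)) (st (r2 ++ w0)) + D (st (r2 ++ w0)) (st (r3 ++ w0)) +
      D (st (r3 ++ w0)) (st (r1 ++ w0)) : ℤ) : ℝ) * N m| := by
    rw [abs_mul, abs_of_pos hN]
    have : (1:ℝ) ≤ |((D (st (r1 ++ w0)) (st (r2 ++ w0)) + D (st (r2 ++ w0)) (st (r3 ++ w0)) +
      D (st (r3 ++ w0)) (st (r1 ++ w0)) : ℤ) : ℝ)| := by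
      exact_mod_cast Int.one_le_abs hF
    nlinarith
  rw [key] at hge
  have hle : ∀ x y : ℝ, |x| ≤ n ^ 2 → |y| ≤ n * δ → |x * y| ≤ n ^ 2 * (n * δ) := by
    intro x y hx hy
    rw [abs_mul]
    exact mul_le_mul hx hy (abs_nonneg _) (by positivity)
  have u1 := hle _ _ g23 f1
  have u2 := hle _ _ g12 f3
  have u3 := hle _ _ g31 f2
  have := (hge.trans (abs_add_three _ _ _))
  linarith


lemma exists_word (n : ℕ) : ∀ a b c : ℤ, c.toNat ≤ n → 1 ≤ a → a ≤ b → b ≤ c → 3 ≤ c →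
    a ^ 2 + b ^ 2 + c ^ 2 = 3 * a * b * c →
    ∃ w, (st w).c = c ∧
      (((st w).a = a ∧ (st w).b = b) ∨ ((st w).a = b ∧ (st w).b = a)) := by
  induction n with
  | zero => intro a b c h; omega
  | succ n ih =>
    intro a b c hn ha hab hbc hc hm
    have hb2 : 2 ≤ b := by
      by_contra hcon
      have h1 : b = 1 := by omega
      have h2 : a = 1 := by omega
      subst h1 h2
      nlinarith
    have hk : (c - b) * (b - (3 * a * b - c)) = 3 * a * b ^ 2 - 2 * b ^ 2 - a ^ 2 := by
      linear_combination hm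
    have hpos : 0 < 3 * a * b ^ 2 - 2 * b ^ 2 - a ^ 2 := by
      rcases eq_or_lt_of_le ha with h | h
      · subst h; nlinarith
      · nlinarith [mul_le_mul_of_nonneg_right (by omega : 2 ≤ a) (sq_nonneg b), mul_self_le_mul_self (by omega) hab]
    rw [← hk] at hpos
    have hcb : b < c := by
      rcases eq_or_lt_of_le hbc with h | h
      · rw [h] at hpos; simp at hpos
      · exact h
    have hkb : 3 * a * b - c < b := by
      have := (mul_pos_iff_of_pos_left (by omega : 0 < c - b)).1 hpos
      omega
    have hkp : 1 ≤ 3 * a * b - c := by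
      have : (3 * a * b - c) * c = a ^ 2 + b ^ 2 := by linear_combination -hm
      have h2 : 0 < (3 * a * b - c) * c := by rw [this]; positivity
      have := (mul_pos_iff_of_pos_right (by omega : 0 < c)).1 h2
      omega
    set k := 3 * a * b - c with hkdef
    have hck : c = 3 * a * b - k := by omega
    have hmk : a ^ 2 + k ^ 2 + b ^ 2 = 3 * a * k * b := by
      rw [hkdef]; linear_combination hm
    by_cases hb3 : 3 ≤ b
    · have hw : ∃ w, (st w).c = b ∧
        (((st w).a = a ∧ (st w).b = k) ∨ ((st w).a = k ∧ (st w).b = a)) := by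
        rcases le_total a k with h | h
        · exact ih a k b (by omega) ha h (by omega) hb3 hmk
        · obtain ⟨w, h1, h2⟩ := ih k a b (by omega) hkp h (by omega) hb3 (by linarith)
          exact ⟨w, h1, h2.symm⟩
      obtain ⟨w, h1, ⟨h2, h3⟩ | ⟨h2, h3⟩⟩ := hw
      · refine ⟨true :: w, ?_, Or.inl ⟨?_, ?_⟩⟩
        · show (step true (st w)).c = c
          simp only [step, h1, h2, h3]
          linarith
        · show (step true (st w)).a = a
          simp only [step, h1, h2, h3]
        · show (step true (st w)).b = b
          simp only [step, h1, h2, h3]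
      · refine ⟨false :: w, ?_, Or.inr ⟨?_, ?_⟩⟩
        · show (step false (st w)).c = c
          simp only [step, h1, h2, h3]
          rw [hck]; ring
        · show (step false (st w)).a = b
          simp only [step, h1, h2, h3]
        · show (step false (st w)).b = a
          simp only [step, h1, h2, h3]
    · have h1 : b = 2 := by omega
      have hk1 : k = 1 := by omega
      have ha1 : a = 1 := by
        rcases (by omega : a = 1 ∨ a = 2) with h | h
        · exact h
        · rw [h, h1, hk1] at hmk; norm_num at hmk
      refine ⟨[], ?_, Or.inl ⟨?_, ?_⟩⟩ <;> simp [st, run, root, ha1, h1]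
      rw [hck, ha1, h1, hk1]; norm_num

lemma frontier (T : ℝ) (w : List Bool) (h : T < (st w).c) : ∃ w0, w0 <:+ w ∧ T < (st w0).c ∧
    (w0 = [] ∨ ∃ d u, w0 = d :: u ∧ ((st u).c : ℝ) ≤ T) := by
  induction w with
  | nil => exact ⟨[], List.suffix_rfl, h, Or.inl rfl⟩
  | cons d u ih =>
    by_cases hu : ((st u).c : ℝ) ≤ T
    · exact ⟨d :: u, List.suffix_rfl, h, Or.inr ⟨d, u, rfl, hu⟩⟩
    · push Not at hu
      obtain ⟨w0, h1, h2⟩ := ih hu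
      exact ⟨w0, h1.trans (List.suffix_cons d u), h2⟩

lemma size (w : List Bool) : ((v1 (st w) : ℝ) + v2 (st w)) * Real.log 2 ≤ Real.log (2 * (st w).c) := by
  have := (geo_st w).sc (good_st w)
  unfold v1 v2; push_cast; exact this

/-- words with small value -/
lemma wle (T : ℝ) (n : ℕ) (h : Real.log (2 * T) < (n + 1) * Real.log 2) :
    {w | ((st w).c : ℝ) ≤ T}.Finite ∧ {w | ((st w).c : ℝ) ≤ T}.ncard ≤ n ^ 2 := by
  have hl2 : 0 < Real.log 2 := Real.log_pos (by norm_num)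
  have hmaps : ∀ w ∈ {w | ((st w).c : ℝ) ≤ T}, (v1 (st w), v2 (st w)) ∈
      ((Finset.Icc (1:ℤ) n ×ˢ Finset.Icc (1:ℤ) n : Finset (ℤ × ℤ)) : Set (ℤ × ℤ)) := by
    intro w hw
    have h1 := size w
    have hp := v_pos w
    have h5 : (5:ℝ) ≤ (st w).c := by exact_mod_cast (good_st w).hc
    have h2 : Real.log (2 * (st w).c) ≤ Real.log (2 * T) :=
      Real.log_le_log (by linarith) (by linarith [Set.mem_ofPred_eq ▸ hw])
    have h3 : (v1 (st w) : ℝ) + v2 (st w) < n + 1 := by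
      by_contra hc
      push Not at hc
      have := mul_le_mul_of_nonneg_right hc hl2.le
      linarith
    have h4 : v1 (st w) + v2 (st w) < n + 1 := by exact_mod_cast h3
    simp only [Finset.coe_product, Finset.coe_Icc, Set.mem_prod, Set.mem_Icc]
    omega
  have hinj : Set.InjOn (fun w => (v1 (st w), v2 (st w))) {w | ((st w).c : ℝ) ≤ T} := by
    intro w _ w' _ hww
    simp only [Prod.mk.injEq] at hww
    exact inj_v w w' hww.1 hww.2
  refine ⟨Set.Finite.of_injOn hmaps hinj (Finset.finite_toSet _), ?_⟩
  have := Set.ncard_le_ncard_of_injOn _ hmaps hinj (Finset.finite_toSet _)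
  rw [Set.ncard_coe_finset, Finset.card_product] at this
  simp at this
  rw [pow_two]; exact this

lemma words_count (m : ℤ) (hm : 2 ≤ m) (n : ℕ)
    (h : Real.log (2 * (7 * Real.log (3 * m))) < (n + 1) * Real.log 2) :
    {w | (st w).c = m}.Finite ∧ {w | (st w).c = m}.ncard ≤ 2 * (1 + 2 * n ^ 2) := by
  classical
  have hm' : (2:ℝ) ≤ m := by exact_mod_cast hm
  set R := Real.log (3 * m) with hR
  have hl2 : 0 < Real.log 2 := Real.log_pos (by norm_num)
  have hl2' : 1 / 2 < Real.log 2 := by have := Real.log_two_gt_d9; linarith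
  have hRl : 2 * Real.log 2 ≤ R := by
    have : 2 * Real.log 2 = Real.log (2 ^ 2) := by rw [Real.log_pow]; norm_num
    rw [this]
    exact Real.log_le_log (by norm_num) (by linarith)
  have hR0 : 0 < R := by linarith
  obtain ⟨hfin, hcard⟩ := wle (7 * R) n h
  by_cases hsmall : (m:ℝ) ≤ 7 * R
  · have hsub : {w | (st w).c = m} ⊆ {w | ((st w).c : ℝ) ≤ 7 * R} := by
      intro w hw
      simp only [Set.mem_ofPred_eq] at hw ⊢
      rw [hw]; exact hsmall
    refine ⟨hfin.subset hsub, (Set.ncard_le_ncard hsub hfin).trans ?_⟩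
    omega
  push Not at hsmall
  have hfin2 : {w | (st w).c = m}.Finite := by
    have : ∃ k : ℕ, Real.log (2 * (m:ℝ)) < (k + 1) * Real.log 2 := by
      obtain ⟨k, hk⟩ := exists_nat_gt (Real.log (2 * (m:ℝ)) / Real.log 2)
      refine ⟨k, ?_⟩
      rw [div_lt_iff₀ hl2] at hk
      linarith
    obtain ⟨k, hk⟩ := this
    refine (wle m k hk).1.subset ?_
    intro w hw
    simp only [Set.mem_ofPred_eq] at hw ⊢
    rw [hw]
  refine ⟨hfin2, ?_⟩
  have hfr : ∀ w, ∃ w0, (st w).c = m → w0 <:+ w ∧ 7 * R < (st w0).c ∧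
    (w0 = [] ∨ ∃ d u, w0 = d :: u ∧ ((st u).c : ℝ) ≤ 7 * R) := by
    intro w
    by_cases hw : (st w).c = m
    · obtain ⟨w0, hw0⟩ := frontier (7 * R) w (by rw [hw]; exact hsmall)
      exact ⟨w0, fun _ => hw0⟩
    · exact ⟨[], fun h => absurd h hw⟩
  choose φ hφ using hfr
  rw [Set.ncard_eq_toFinset_card _ hfin2]
  set F : Finset (List Bool) := insert [] ((Finset.univ ×ˢ hfin.toFinset).image
    (fun x : Bool × List Bool => x.1 :: x.2)) with hF
  have hFc : F.card ≤ 1 + 2 * n ^ 2 := by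
    refine (Finset.card_insert_le _ _).trans ?_
    have h1 := Finset.card_image_le (s := Finset.univ ×ˢ hfin.toFinset)
      (f := fun x : Bool × List Bool => x.1 :: x.2)
    rw [Finset.card_product, ← Set.ncard_eq_toFinset_card _ hfin] at h1
    simp only [Finset.card_univ, Fintype.card_bool] at h1
    omega
  refine (Finset.card_le_mul_card_image_of_maps_to (f := φ) (t := F) ?_ 2 ?_).trans (by omega)
  · intro w hw
    simp only [Set.Finite.mem_toFinset, Set.mem_ofPred_eq] at hw
    obtain ⟨-, -, h3⟩ := hφ w hw
    rw [hF, Finset.mem_insert]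
    rcases h3 with h3 | ⟨d, u, h3, h4⟩
    · exact Or.inl h3
    · right
      rw [Finset.mem_image]
      exact ⟨(d, u), by simp [h4], h3.symm⟩
  · intro w0 _
    by_contra hc
    push Not at hc
    obtain ⟨w1, k1, w2, k2, w3, k3, n12, n13, n23⟩ := Finset.two_lt_card.1 hc
    simp only [Finset.mem_filter, Set.Finite.mem_toFinset, Set.mem_ofPred_eq] at k1 k2 k3
    obtain ⟨c1, e1⟩ := k1
    obtain ⟨c2, e2⟩ := k2
    obtain ⟨c3, e3⟩ := k3
    obtain ⟨s1, hbig, -⟩ := hφ w1 c1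
    obtain ⟨s2, -, -⟩ := hφ w2 c2
    obtain ⟨s3, -, -⟩ := hφ w3 c3
    rw [e1] at s1 hbig
    rw [e2] at s2
    rw [e3] at s3
    obtain ⟨r1, rfl⟩ := s1
    obtain ⟨r2, rfl⟩ := s2
    obtain ⟨r3, rfl⟩ := s3
    refine three (n := 2 * R) c1 c2 c3 n12 n23 n13 ?_ ?_
    · intro w hw
      have h1 := size w
      rw [hw] at h1
      have h2 : Real.log (2 * m) ≤ R := Real.log_le_log (by linarith) (by linarith)
      have hp := v_pos w
      have c1 : (1:ℝ) ≤ v1 (st w) := by exact_mod_cast hp.1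
      have c2 : (1:ℝ) ≤ v2 (st w) := by exact_mod_cast hp.2
      nlinarith
    · have hN : R / 2 ≤ N m := by
        have h1 : Real.log (3 * m / 2) ≤ N m :=
          Real.log_le_log (by linarith) E_half
        rw [Real.log_div (by linarith) (by norm_num)] at h1
        linarith
      have hδ : 1 / ((st w0).c : ℝ) ^ 2 ≤ 1 / (7 * R) ^ 2 := by gcongr
      have : 3 * ((2 * R) ^ 2 * (2 * R * (1 / ((st w0).c : ℝ) ^ 2))) ≤
          3 * ((2 * R) ^ 2 * (2 * R * (1 / (7 * R) ^ 2))) := by gcongr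
      have h2 : 3 * ((2 * R) ^ 2 * (2 * R * (1 / (7 * R) ^ 2))) = 24 / 49 * R := by
        field_simp; norm_num
      linarith

lemma triples_le (m : ℕ) (hm : 3 ≤ m) (hfin : {w | (st w).c = (m:ℤ)}.Finite) :
    Set.ncard {t : ℕ × ℕ × ℕ | IsMarkoffTriple t ∧ t.1 ≤ t.2.1 ∧ t.2.1 ≤ t.2.2 ∧
          t.2.2 = m} ≤ {w | (st w).c = (m:ℤ)}.ncard := by
  have hex : ∀ t : ℕ × ℕ × ℕ, ∃ w, (IsMarkoffTriple t ∧ t.1 ≤ t.2.1 ∧ t.2.1 ≤ t.2.2 ∧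
          t.2.2 = m) → (st w).c = m ∧ (((st w).a = t.1 ∧ (st w).b = t.2.1) ∨
            ((st w).a = t.2.1 ∧ (st w).b = t.1)) := by
    intro t
    by_cases ht : (IsMarkoffTriple t ∧ t.1 ≤ t.2.1 ∧ t.2.1 ≤ t.2.2 ∧ t.2.2 = m)
    · obtain ⟨⟨h1, h2, h3, h4⟩, h5, h6, h7⟩ := ht
      rw [h7] at h4 h6
      obtain ⟨w, hw⟩ := exists_word m t.1 t.2.1 m (by simp) (by omega) (by omega) (by omega)
        (by omega) (by exact_mod_cast h4)
      exact ⟨w, fun _ => hw⟩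
    · exact ⟨[], fun h => absurd h ht⟩
  choose f hf using hex
  refine Set.ncard_le_ncard_of_injOn f ?_ ?_ hfin
  · intro t ht
    exact (hf t ht).1
  · intro t ht t' ht' he
    have h1 := (hf t ht).2
    have h2 := (hf t' ht').2
    rw [he] at h1
    obtain ⟨-, h5, h6, h7⟩ := ht
    obtain ⟨-, h5', h6', h7'⟩ := ht'
    refine Prod.ext ?_ (Prod.ext ?_ ?_) <;> omega

end MK

/-- There is a constant `C > 0` such that, for every `m ≥ 2`, the number of Markoff
triples `(a, b, c)` with `a ≤ b ≤ c` and largest entry `c = m` is at most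
`C · (log log (3m))²`. -/
theorem markoff_fiber_loglog_squared_bound :
    ∃ C : ℝ, 0 < C ∧ ∀ m : ℕ, 2 ≤ m →
      (Set.ncard {t : ℕ × ℕ × ℕ | IsMarkoffTriple t ∧ t.1 ≤ t.2.1 ∧ t.2.1 ≤ t.2.2 ∧
          t.2.2 = m} : ℝ)
        ≤ C * (Real.log (Real.log (3 * m))) ^ 2 := by
  refine ⟨10000, by norm_num, ?_⟩
  intro m hm
  have hm' : (2:ℝ) ≤ m := by exact_mod_cast hm
  have hl2 := Real.log_two_gt_d9
  have hl2' := Real.log_two_lt_d9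
  set R := Real.log (3 * m) with hR
  have hRl : 5 / 3 ≤ R := by
    rw [hR, Real.le_log_iff_exp_le (by linarith)]
    have h1 : Real.exp (5 / 3) ^ 3 ≤ 6 ^ 3 := by
      rw [← Real.exp_nat_mul]
      have := Real.exp_one_lt_d9
      have h2 : Real.exp ((3:ℕ) * (5 / 3)) = Real.exp 1 ^ 5 := by
        rw [← Real.exp_nat_mul]; norm_num
      rw [h2]
      calc Real.exp 1 ^ 5 ≤ 2.7182818286 ^ 5 := by gcongr
        _ ≤ 6 ^ 3 := by norm_num
    have := le_of_pow_le_pow_left₀ (by norm_num) (by norm_num) h1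
    linarith
  have hLR : 2 / 5 ≤ Real.log R := by
    have := Real.one_sub_inv_le_log_of_pos (x := R) (by linarith)
    have h2 : R⁻¹ ≤ (5 / 3)⁻¹ := by gcongr
    norm_num at h2
    linarith
  set Q := Real.log R with hQ
  rcases (by omega : m = 2 ∨ 3 ≤ m) with h2 | h3
  · have hsub : {t : ℕ × ℕ × ℕ | IsMarkoffTriple t ∧ t.1 ≤ t.2.1 ∧ t.2.1 ≤ t.2.2 ∧
          t.2.2 = m} ⊆ {((1, 1, 2) : ℕ × ℕ × ℕ)} := by
      rintro ⟨a, b, c⟩ ⟨⟨h1, h3, h4, h5⟩, h6, h7, h8⟩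
      simp only at *
      subst h8
      rw [h2] at h5 h7
      rw [h2]
      have : b = 1 ∨ b = 2 := by omega
      have : a = 1 ∨ a = 2 := by omega
      rcases ‹b = 1 ∨ b = 2› with rfl | rfl <;> rcases ‹a = 1 ∨ a = 2› with rfl | rfl <;> simp at h5 ⊢
    have := Set.ncard_le_ncard hsub (Set.finite_singleton _)
    rw [Set.ncard_singleton] at this
    have : (Set.ncard {t : ℕ × ℕ × ℕ | IsMarkoffTriple t ∧ t.1 ≤ t.2.1 ∧ t.2.1 ≤ t.2.2 ∧
          t.2.2 = m} : ℝ) ≤ 1 := by exact_mod_cast this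
    nlinarith
  · set n := ⌊Real.log (2 * (7 * R)) / Real.log 2⌋₊ with hn
    have hlog : Real.log (2 * (7 * R)) ≤ 4 * Real.log 2 + Q := by
      have : 4 * Real.log 2 = Real.log (2 ^ 4) := by rw [Real.log_pow]; norm_num
      rw [this, hQ, ← Real.log_mul (by norm_num) (by linarith)]
      exact Real.log_le_log (by linarith) (by linarith)
    have hlog0 : 0 ≤ Real.log (2 * (7 * R)) := Real.log_nonneg (by linarith)
    have hn1 : Real.log (2 * (7 * R)) < (n + 1) * Real.log 2 := by
      rw [← div_lt_iff₀ (by linarith)]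
      exact Nat.lt_floor_add_one _
    have hn2 : (n:ℝ) ≤ 16 * Q := by
      have h1 : (n:ℝ) ≤ Real.log (2 * (7 * R)) / Real.log 2 := Nat.floor_le (by positivity)
      rw [le_div_iff₀ (by linarith)] at h1
      nlinarith
    obtain ⟨hf, hc⟩ := MK.words_count (m:ℤ) (by omega) n (by rw [Int.cast_natCast]; exact hn1)
    have h4 := (MK.triples_le m h3 hf).trans hc
    have h5 : (Set.ncard {t : ℕ × ℕ × ℕ | IsMarkoffTriple t ∧ t.1 ≤ t.2.1 ∧ t.2.1 ≤ t.2.2 ∧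
          t.2.2 = m} : ℝ) ≤ 2 * (1 + 2 * (n:ℝ) ^ 2) := by exact_mod_cast h4
    have h6 : (n:ℝ) ^ 2 ≤ (16 * Q) ^ 2 := by gcongr
    nlinarith
end

section
/- For every ε > 0 there exists a constant C(ε) > 0 such that for every integer m ≥ 2, the number of Markoff triples (a, b, c) of positive integers with a ≤ b ≤ c, a² + b² + c² = 3·a·b·c, and c = m is at most C(ε)·(log m)^ε. -/
/-- Coprime pairs of positive integers, generated by the Euclidean algorithm. -/
theorem cop_ind {P : ℕ → ℕ → Prop} (h1 : P 1 1)
    (hl : ∀ i j, 0 < i → 0 < j → Nat.Coprime i j → P i j → P (i + j) j)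
    (hr : ∀ i j, 0 < i → 0 < j → Nat.Coprime i j → P i j → P i (i + j)) :
    ∀ i j, 0 < i → 0 < j → Nat.Coprime i j → P i j := by
  have key : ∀ n i j, i + j ≤ n → 0 < i → 0 < j → Nat.Coprime i j → P i j := by
    intro n
    induction n with
    | zero => intro i j h hi; omega
    | succ n ih =>
      intro i j h hi hj hc
      rcases lt_trichotomy i j with hij | hij | hij
      · obtain ⟨k, rfl⟩ := Nat.exists_eq_add_of_lt hij
        have hc' : Nat.Coprime i (k + 1) := by
          have : Nat.Coprime i (i + (k + 1)) := by simpa [add_assoc] using hc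
          simpa using this
        have := hr i (k + 1) hi (by omega) hc' (ih i (k + 1) (by omega) hi (by omega) hc')
        simpa [add_assoc] using this
      · subst hij
        have : i = 1 := by simpa using hc
        subst this
        exact h1
      · obtain ⟨k, rfl⟩ := Nat.exists_eq_add_of_lt hij
        have hc' : Nat.Coprime (k + 1) j := by
          have : Nat.Coprime ((k + 1) + j) j := by
            have e : j + k + 1 = (k + 1) + j := by omega
            rw [← e]; exact hc
          simpa using this
        have := hl (k + 1) j (by omega) hj hc' (ih (k + 1) j (by omega) (by omega) hj hc')
        have e : j + k + 1 = (k + 1) + j := by omega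
        rw [e]; exact this
  intro i j
  exact key (i + j) i j le_rfl

/-- The state reached from `(x, y, z)` (values at `p`, `q`, `p + q`) at the vector `i p + j q`. -/
noncomputable def TT (x y z : ℝ) (i j : ℕ) : ℝ × ℝ × ℝ :=
  if _h : j = 0 ∨ i = 0 ∨ i = j then (x, y, z)
  else if j < i then TT x z (x * z - y) (i - j) j
  else TT z y (z * y - x) i (j - i)
termination_by i + j
decreasing_by all_goals omega

theorem TT_one (x y z : ℝ) : TT x y z 1 1 = (x, y, z) := by
  rw [TT]; simp

theorem TT_left (x y z : ℝ) {i j : ℕ} (hi : 0 < i) (hj : 0 < j) :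
    TT x y z (i + j) j = TT x z (x * z - y) i j := by
  rw [TT, dif_neg (by omega), if_pos (by omega)]
  simp

theorem TT_right (x y z : ℝ) {i j : ℕ} (hi : 0 < i) (hj : 0 < j) :
    TT x y z i (i + j) = TT z y (z * y - x) i j := by
  rw [TT, dif_neg (by omega), if_neg (by omega)]
  simp

/-- Value at `i p + j q`. -/
noncomputable def MM (x y z : ℝ) (i j : ℕ) : ℝ := (TT x y z i j).2.2

theorem MM_one (x y z : ℝ) : MM x y z 1 1 = z := by rw [MM, TT_one]

theorem MM_left (x y z : ℝ) {i j : ℕ} (hi : 0 < i) (hj : 0 < j) :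
    MM x y z (i + j) j = MM x z (x * z - y) i j := by rw [MM, TT_left x y z hi hj, MM]

theorem MM_right (x y z : ℝ) {i j : ℕ} (hi : 0 < i) (hj : 0 < j) :
    MM x y z i (i + j) = MM z y (z * y - x) i j := by rw [MM, TT_right x y z hi hj, MM]

/-- The invariant of tree states. -/
structure Good (x y z : ℝ) : Prop where
  hx : 3 ≤ x
  hy : 3 ≤ y
  hz : 2 * (x * y) ≤ 3 * z
  eq : x ^ 2 + y ^ 2 + z ^ 2 = x * y * z

theorem Good.z6 {x y z : ℝ} (h : Good x y z) : 6 ≤ z := by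
  have := h.hz; nlinarith [h.hx, h.hy]

theorem Good.symm {x y z : ℝ} (h : Good x y z) : Good y x z :=
  ⟨h.hy, h.hx, by linarith [h.hz, mul_comm x y], by linarith [h.eq, mul_comm x y]⟩

theorem Good.left {x y z : ℝ} (h : Good x y z) : Good x z (x * z - y) := by
  have h6 := h.z6
  have hx := h.hx
  have hy := h.hy
  have hz := h.hz
  refine ⟨hx, by linarith, ?_, by linear_combination h.eq⟩
  have : y ≤ z := by nlinarith
  nlinarith

theorem Good.right {x y z : ℝ} (h : Good x y z) : Good z y (z * y - x) := by
  have := h.symm.left.symm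
  rwa [mul_comm y z] at this

theorem good_root : Good 3 3 6 := ⟨by norm_num, by norm_num, by norm_num, by norm_num⟩

noncomputable def Lam (x : ℝ) : ℝ := Real.log ((x + √(x ^ 2 - 4)) / 2)

theorem exp_Lam {x : ℝ} (hx : 3 ≤ x) :
    2 ≤ Real.exp (Lam x) ∧ Real.exp (Lam x) + (Real.exp (Lam x))⁻¹ = x := by
  have h0 : 0 ≤ x ^ 2 - 4 := by nlinarith
  have hs := Real.sq_sqrt h0
  have hs0 := Real.sqrt_nonneg (x ^ 2 - 4)
  have h1 : 1 ≤ √(x ^ 2 - 4) := by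
    rw [Real.one_le_sqrt]; nlinarith
  rw [Lam, Real.exp_log (by linarith)]
  refine ⟨by linarith, ?_⟩
  have : x + √(x ^ 2 - 4) ≠ 0 := by linarith
  field_simp
  nlinarith

theorem half_lt_Lam {x : ℝ} (hx : 3 ≤ x) : 1 / 2 < Lam x := by
  have h := (exp_Lam hx).1
  have h2 : Real.log 2 ≤ Lam x := by
    rw [Real.log_le_iff_le_exp (by norm_num)]; exact h
  linarith [Real.log_two_gt_d9]

noncomputable def DD (x y z : ℝ) : ℝ := Lam x + Lam y - Lam z

theorem DD_symm (x y z : ℝ) : DD x y z = DD y x z := by unfold DD; ring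

theorem DD_core {q z σ σ' τ τ' e z0 D : ℝ} (h6 : 6 ≤ z) (hz : 2 * q ≤ 3 * z)
    (hxyz : 0 < q * z) (hσ : 2 ≤ σ) (hzσ : σ + σ' = z) (hσi0 : 0 < σ') (hσσ : σ * σ' = 1)
    (hσ5 : σ' ≤ 1 / 5) (hz0 : z0 = τ + τ') (hxy : q = z0 + e)
    (hprod : (z0 - z) * (z0 - (q - z)) = 4) (hτ4 : 4 ≤ τ) (hττ : τ * τ' = 1) (hτ'0 : 0 < τ')
    (hhalf : e ≤ z0) (hpos : 0 < e) (hlo : -D + 1 ≤ σ / τ) (hup : D + 1 ≤ τ / σ) :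
    4 / (q * z) ≤ D ∧ D ≤ 4 / ((2 * z - q) * (z - 2 / 5)) := by
  have hτ'4 : τ' ≤ 1 / 4 := by
    have := mul_le_mul_of_nonneg_right hτ4 hτ'0.le
    linarith
  have hzz : 0 < z0 - (q - z) := by linarith
  have hgt : z < z0 := by
    by_contra hcon
    have := mul_nonneg (show 0 ≤ z - z0 by linarith) hzz.le
    linarith
  have hid : (τ - σ) * (1 - τ' * σ') = z0 - z := by
    rw [hz0, ← hzσ]; linear_combination (-σ') * hττ + τ' * hσσ
  have hts : τ' * σ' ≤ 1 / 20 := by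
    have := mul_le_mul hτ'4 hσ5 hσi0.le (by norm_num)
    linarith
  have hts0 : 0 < τ' * σ' := by positivity
  have hστ : σ < τ := by
    by_contra hcon
    have := mul_nonneg (show 0 ≤ σ - τ by linarith) (show 0 ≤ 1 - τ' * σ' by linarith)
    linarith
  constructor
  · have h1 : 1 - σ / τ ≤ D := by linarith
    refine le_trans ?_ h1
    have h2 : 1 - σ / τ = (τ - σ) / τ := by field_simp
    rw [h2, div_le_div_iff₀ hxyz (by linarith)]
    have h3 : z0 - z ≤ τ - σ := by
      have := mul_pos (sub_pos.2 hστ) hts0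
      linarith
    have h4 : 4 ≤ (τ - σ) * z := by
      calc 4 = (z0 - z) * (z0 - (q - z)) := hprod.symm
        _ ≤ (τ - σ) * z := by
          apply mul_le_mul h3 (by linarith) hzz.le (by linarith)
    calc 4 * τ ≤ ((τ - σ) * z) * q := by
          apply mul_le_mul h4 (by linarith) (by linarith) (by linarith)
      _ = (τ - σ) * (q * z) := by ring
  · have h1 : D ≤ τ / σ - 1 := by linarith
    refine le_trans h1 ?_
    have h2 : τ / σ - 1 = (τ - σ) / σ := by field_simp
    have h5 : 0 < 2 * z - q := by linarith
    rw [h2, div_le_div_iff₀ (by linarith) (mul_pos h5 (by linarith))]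
    have h3 : (τ - σ) * (σ * (1 - τ' * σ')) = σ * (z0 - z) := by rw [← hid]; ring
    have h6 : z - 2 / 5 ≤ σ * (1 - τ' * σ') := by
      have : σ * (τ' * σ') = τ' := by linear_combination τ' * hσσ
      have h7 : τ' ≤ σ' := by
        have h8 := mul_pos (mul_pos hσi0 hτ'0) (sub_pos.2 hστ)
        have h9 : σ' * τ' * (τ - σ) = σ' - τ' := by
          linear_combination σ' * hττ - τ' * hσσ
        linarith
      have h10 : σ * (1 - τ' * σ') = σ - σ * (τ' * σ') := by ring
      linarith
    calc (τ - σ) * ((2 * z - q) * (z - 2 / 5))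
        = ((τ - σ) * (z - 2 / 5)) * (2 * z - q) := by ring
      _ ≤ (σ * (z0 - z)) * (z0 - (q - z)) := by
          apply mul_le_mul _ (by linarith) h5.le
          · apply mul_nonneg (by linarith) (by linarith)
          · rw [← h3]; exact mul_le_mul_of_nonneg_left h6 (by linarith)
      _ = 4 * σ := by linear_combination σ * hprod

theorem DD_bounds {x y z : ℝ} (h : Good x y z) :
    4 / (x * y * z) ≤ DD x y z ∧ DD x y z ≤ 4 / ((2 * z - x * y) * (z - 2 / 5)) := by
  have h6 := h.z6
  have hx := h.hx
  have hy := h.hy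
  have hz := h.hz
  have heq := h.eq
  obtain ⟨ht, hxt⟩ := exp_Lam hx
  obtain ⟨hs, hys⟩ := exp_Lam hy
  obtain ⟨hσ, hzσ⟩ := exp_Lam (show (3 : ℝ) ≤ z by linarith)
  have hD : Real.exp (DD x y z) = Real.exp (Lam x) * Real.exp (Lam y) / Real.exp (Lam z) := by
    rw [DD, Real.exp_sub, Real.exp_add]
  set t := Real.exp (Lam x)
  set s := Real.exp (Lam y)
  set σ := Real.exp (Lam z)
  have hti : t⁻¹ ≤ 1 / 2 := by
    rw [inv_eq_one_div]; exact one_div_le_one_div_of_le (by norm_num) ht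
  have hsi : s⁻¹ ≤ 1 / 2 := by
    rw [inv_eq_one_div]; exact one_div_le_one_div_of_le (by norm_num) hs
  have hσi : σ⁻¹ ≤ 1 / 2 := by
    rw [inv_eq_one_div]; exact one_div_le_one_div_of_le (by norm_num) hσ
  have hti0 : 0 < t⁻¹ := by positivity
  have hsi0 : 0 < s⁻¹ := by positivity
  have hσi0 : 0 < σ⁻¹ := by positivity
  have htt : t * t⁻¹ = 1 := mul_inv_cancel₀ (by linarith)
  have hss : s * s⁻¹ = 1 := mul_inv_cancel₀ (by linarith)
  have hσσ : σ * σ⁻¹ = 1 := mul_inv_cancel₀ (by linarith)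
  have hσ5 : σ⁻¹ ≤ 1 / 5 := by
    rw [inv_eq_one_div]; exact one_div_le_one_div_of_le (by norm_num) (by linarith)
  generalize t⁻¹ = t' at *
  generalize s⁻¹ = s' at *
  generalize σ⁻¹ = σ' at *
  obtain ⟨z0, hz0⟩ : ∃ z0, z0 = t * s + t' * s' := ⟨_, rfl⟩
  have hxy : x * y = z0 + (t * s' + t' * s) := by rw [hz0, ← hxt, ← hys]; ring
  have hprod : (z0 - z) * (z0 - (x * y - z)) = 4 := by
    have e1 : z0 ^ 2 - x * y * z0 + x ^ 2 + y ^ 2 = 4 := by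
      rw [hxy, hz0, ← hxt, ← hys]
      linear_combination (2 - s ^ 2 - s' ^ 2) * htt + (2 - t ^ 2 - t' ^ 2) * hss
    linear_combination e1 - heq
  have hτ4 : 4 ≤ t * s := by nlinarith
  have hττ : (t * s) * (t' * s') = 1 := by linear_combination s * s' * htt + hss
  have hτ'0 : 0 < t' * s' := by positivity
  have hhalf : t * s' + t' * s ≤ z0 := by
    rw [hz0]; nlinarith [mul_nonneg (show 0 ≤ t - t' by linarith) (show 0 ≤ s - s' by linarith)]
  have hpos : 0 < t * s' + t' * s := by positivity
  have hexpneg : Real.exp (-DD x y z) = σ / (t * s) := by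
    rw [Real.exp_neg, hD, inv_div]
  have hlo := Real.add_one_le_exp (-DD x y z)
  have hup := Real.add_one_le_exp (DD x y z)
  rw [hexpneg] at hlo
  rw [hD] at hup
  have hxyz : 0 < x * y * z := by positivity
  exact DD_core h6 hz hxyz hσ hzσ hσi0 hσσ hσ5 hz0 hxy hprod hτ4 hττ hτ'0 hhalf hpos hlo hup

theorem DD_pos {x y z : ℝ} (h : Good x y z) : 0 < DD x y z := by
  refine lt_of_lt_of_le ?_ (DD_bounds h).1
  have := h.hx
  have := h.hy
  have := h.z6
  positivity

theorem DD_le {x y z : ℝ} (h : Good x y z) : DD x y z ≤ 16 / z ^ 2 := by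
  refine (DD_bounds h).2.trans ?_
  have := h.z6
  have h2 := h.hz
  have h3 : z / 2 ≤ 2 * z - x * y := by linarith
  have h4 : z / 2 ≤ z - 2 / 5 := by linarith
  have h5 : (z / 2) * (z / 2) ≤ (2 * z - x * y) * (z - 2 / 5) :=
    mul_le_mul h3 h4 (by linarith) (by linarith)
  calc 4 / ((2 * z - x * y) * (z - 2 / 5)) ≤ 4 / ((z / 2) * (z / 2)) :=
        div_le_div_of_nonneg_left (by norm_num) (by positivity) h5
    _ = 16 / z ^ 2 := by field_simp; norm_num

theorem DD_left {x y z : ℝ} (h : Good x y z) : 3 * DD x z (x * z - y) ≤ DD x y z := by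
  have h1 := (DD_bounds h).1
  have h2 := (DD_bounds h.left).2
  have hx := h.hx
  have hy := h.hy
  have hz := h.hz
  have h6 := h.z6
  have key : 3 * (x * y * z) ≤ (2 * (x * z - y) - x * z) * (x * z - y - 2 / 5) := by
    obtain ⟨e, he, rfl⟩ : ∃ e, 0 ≤ e ∧ z = 2 * (x * y) / 3 + e :=
      ⟨z - 2 * (x * y) / 3, by linarith, by ring⟩
    obtain ⟨a, ha, rfl⟩ : ∃ a, 0 ≤ a ∧ x = 3 + a := ⟨x - 3, by linarith, by ring⟩
    obtain ⟨b, hb, rfl⟩ : ∃ b, 0 ≤ b ∧ y = 3 + b := ⟨y - 3, by linarith, by ring⟩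
    rw [← sub_nonneg]
    ring_nf
    positivity
  have hpos : 0 < x * y * z := by positivity
  have h3 : DD x z (x * z - y) ≤ 4 / (3 * (x * y * z)) :=
    h2.trans (div_le_div_of_nonneg_left (by norm_num) (by positivity) key)
  have h4 : 3 * (4 / (3 * (x * y * z))) = 4 / (x * y * z) := by field_simp
  linarith

theorem DD_right {x y z : ℝ} (h : Good x y z) : 3 * DD z y (z * y - x) ≤ DD x y z := by
  have := DD_left h.symm
  rwa [DD_symm y x, DD_symm y z, mul_comm y z] at this

theorem growth : ∀ i j, 0 < i → 0 < j → Nat.Coprime i j → ∀ x y z, Good x y z →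
    (2 * x / 3) ^ i * (2 * y / 3) ^ j ≤ 2 * MM x y z i j / 3 := by
  apply cop_ind
  · intro x y z h
    rw [MM_one]; have := h.hz; linarith
  · intro i j hi hj _ ih x y z h
    rw [MM_left x y z hi hj]
    refine le_trans ?_ (ih x z _ h.left)
    have := h.hx
    have := h.hy
    have hz := h.hz
    rw [pow_add, mul_assoc, ← mul_pow]
    apply mul_le_mul_of_nonneg_left _ (by positivity)
    apply pow_le_pow_left₀ (by positivity)
    linarith
  · intro i j hi hj _ ih x y z h
    rw [MM_right x y z hi hj]
    refine le_trans ?_ (ih z y _ h.right)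
    have := h.hx
    have := h.hy
    have hz := h.hz
    rw [pow_add, ← mul_assoc, ← mul_pow]
    apply mul_le_mul_of_nonneg_right _ (by positivity)
    apply pow_le_pow_left₀ (by positivity)
    linarith

theorem growth2 {i j : ℕ} (hi : 0 < i) (hj : 0 < j) (hc : Nat.Coprime i j) {x y z : ℝ}
    (h : Good x y z) : (2 : ℝ) ^ (i + j) ≤ 2 * MM x y z i j / 3 := by
  refine le_trans ?_ (growth i j hi hj hc x y z h)
  have := h.hx
  have := h.hy
  rw [pow_add]
  apply mul_le_mul
  · apply pow_le_pow_left₀ (by positivity); linarith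
  · apply pow_le_pow_left₀ (by positivity); linarith
  · positivity
  · positivity

/-- In a cone the height is almost linear. -/
theorem almost_linear : ∀ i j, 0 < i → 0 < j → Nat.Coprime i j → ∀ x y z, Good x y z →
    0 ≤ i * Lam x + j * Lam y - Lam (MM x y z i j) ∧
      i * Lam x + j * Lam y - Lam (MM x y z i j) ≤ (i + j) * DD x y z := by
  apply cop_ind
  · intro x y z h
    rw [MM_one]
    have := DD_pos h
    unfold DD at *
    push_cast
    constructor <;> linarith
  · intro i j hi hj _ ih x y z h
    rw [MM_left x y z hi hj]
    obtain ⟨h1, h2⟩ := ih x z _ h.left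
    have h3 := DD_left h
    have h4 := DD_pos h
    have h5 := DD_pos h.left
    have e : Lam y = DD x y z + Lam z - Lam x := by unfold DD; ring
    have hi' : (0 : ℝ) < i := by exact_mod_cast hi
    have hj' : (0 : ℝ) < j := by exact_mod_cast hj
    rw [e]
    push_cast
    have h6 := mul_le_mul_of_nonneg_left h3 (show (0 : ℝ) ≤ i + j by positivity)
    have h7 : 0 < (i + j : ℝ) * DD x z (x * z - y) := by positivity
    have h8 : 0 < j * DD x y z := by positivity
    have h9 : 0 < i * DD x y z := by positivity
    constructor <;> nlinarith
  · intro i j hi hj _ ih x y z h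
    rw [MM_right x y z hi hj]
    obtain ⟨h1, h2⟩ := ih z y _ h.right
    have h3 := DD_right h
    have h4 := DD_pos h
    have h5 := DD_pos h.right
    have e : Lam x = DD x y z + Lam z - Lam y := by unfold DD; ring
    have hi' : (0 : ℝ) < i := by exact_mod_cast hi
    have hj' : (0 : ℝ) < j := by exact_mod_cast hj
    rw [e]
    push_cast
    have h6 := mul_le_mul_of_nonneg_left h3 (show (0 : ℝ) ≤ i + j by positivity)
    have h7 : 0 < (i + j : ℝ) * DD z y (z * y - x) := by positivity
    have h8 : 0 < j * DD x y z := by positivity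
    have h9 : 0 < i * DD x y z := by positivity
    constructor <;> nlinarith

/-- A linear functional with enough slack at one side of a cone stays below the height. -/
theorem below : ∀ i j, 0 < i → 0 < j → Nat.Coprime i j → ∀ x y z, Good x y z →
    ∀ sx sy : ℝ, 0 ≤ sx → 0 ≤ sy → (3 / 2 * DD x y z ≤ sx ∨ 3 / 2 * DD x y z ≤ sy) →
      i * (Lam x - sx) + j * (Lam y - sy) < Lam (MM x y z i j) := by
  apply cop_ind
  · intro x y z h sx sy hx hy hs
    rw [MM_one]
    have := DD_pos h
    have e : Lam z = Lam x + Lam y - DD x y z := by unfold DD; ring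
    rw [e]
    push_cast
    rcases hs with hs | hs <;> linarith
  · intro i j hi hj _ ih x y z h sx sy hx hy hs
    rw [MM_left x y z hi hj]
    have h3 := DD_left h
    have h4 := DD_pos h
    have h5 : DD x y z / 2 ≤ sx + sy - DD x y z := by rcases hs with hs | hs <;> linarith
    refine lt_of_eq_of_lt ?_ (ih x z _ h.left sx (sx + sy - DD x y z) hx (by linarith)
      (Or.inr (by linarith)))
    unfold DD
    push_cast
    ring
  · intro i j hi hj _ ih x y z h sx sy hx hy hs
    rw [MM_right x y z hi hj]
    have h3 := DD_right h
    have h4 := DD_pos h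
    have h5 : DD x y z / 2 ≤ sx + sy - DD x y z := by rcases hs with hs | hs <;> linarith
    refine lt_of_eq_of_lt ?_ (ih z y _ h.right (sx + sy - DD x y z) sy (by linarith) hy
      (Or.inl (by linarith)))
    unfold DD
    push_cast
    ring

theorem cop_cases {i j : ℕ} (hi : 0 < i) (hj : 0 < j) (hc : Nat.Coprime i j) :
    (i = 1 ∧ j = 1) ∨ (∃ k, 0 < k ∧ Nat.Coprime k j ∧ i = k + j) ∨
      (∃ k, 0 < k ∧ Nat.Coprime i k ∧ j = i + k) := by
  revert i j
  intro i j hi hj hc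
  refine cop_ind (P := fun i j => (i = 1 ∧ j = 1) ∨ (∃ k, 0 < k ∧ Nat.Coprime k j ∧ i = k + j) ∨
      (∃ k, 0 < k ∧ Nat.Coprime i k ∧ j = i + k)) (Or.inl ⟨rfl, rfl⟩) ?_ ?_ i j hi hj hc
  · intro i j hi hj hc _
    exact Or.inr (Or.inl ⟨i, hi, hc, rfl⟩)
  · intro i j hi hj hc _
    exact Or.inr (Or.inr ⟨j, hj, hc, rfl⟩)

/-- Supporting functional of the height at a primitive vector. -/
theorem support : ∀ i₀ j₀, 0 < i₀ → 0 < j₀ → Nat.Coprime i₀ j₀ → ∀ x y z, Good x y z →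
    ∃ sx sy : ℝ, 0 < sx ∧ 0 < sy ∧ sx ≤ 3 / 2 * DD x y z ∧ sy ≤ 3 / 2 * DD x y z ∧
      i₀ * (Lam x - sx) + j₀ * (Lam y - sy) = Lam (MM x y z i₀ j₀) ∧
      ∀ i j : ℕ, 0 < i → 0 < j → Nat.Coprime i j → ¬ (i = i₀ ∧ j = j₀) →
        i * (Lam x - sx) + j * (Lam y - sy) < Lam (MM x y z i j) := by
  apply cop_ind
  · intro x y z h
    have hD := DD_pos h
    have hl := DD_left h
    have hr := DD_right h
    refine ⟨DD x y z / 2, DD x y z / 2, by linarith, by linarith, by linarith, by linarith, ?_, ?_⟩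
    · rw [MM_one]; unfold DD; push_cast; ring
    · intro i j hi hj hc hne
      rcases cop_cases hi hj hc with ⟨rfl, rfl⟩ | ⟨k, hk, hc', rfl⟩ | ⟨k, hk, hc', rfl⟩
      · exact absurd ⟨rfl, rfl⟩ hne
      · rw [MM_left x y z hk hj]
        refine lt_of_eq_of_lt ?_ (below k j hk hj hc' x z _ h.left (DD x y z / 2) 0 (by linarith)
          le_rfl (Or.inl (by linarith)))
        unfold DD; push_cast; ring
      · rw [MM_right x y z hi hk]
        refine lt_of_eq_of_lt ?_ (below i k hi hk hc' z y _ h.right 0 (DD x y z / 2) le_rfl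
          (by linarith) (Or.inr (by linarith)))
        unfold DD; push_cast; ring
  · intro i₀ j₀ hi₀ hj₀ _ ih x y z h
    have hD := DD_pos h
    have hl := DD_left h
    have hr := DD_right h
    obtain ⟨sx, sz, hsx, hsz, hsx', hsz', he, hlt⟩ := ih x z _ h.left
    refine ⟨sx, sz - sx + DD x y z, by linarith, by linarith, by linarith, by linarith, ?_, ?_⟩
    · rw [MM_left x y z hi₀ hj₀, ← he]; unfold DD; push_cast; ring
    · intro i j hi hj hc hne
      rcases cop_cases hi hj hc with ⟨rfl, rfl⟩ | ⟨k, hk, hc', rfl⟩ | ⟨k, hk, hc', rfl⟩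
      · rw [MM_one]
        have e : Lam z = Lam x + Lam y - DD x y z := by unfold DD; ring
        rw [e]; push_cast; linarith
      · rw [MM_left x y z hk hj]
        refine lt_of_eq_of_lt ?_ (hlt k j hk hj hc' (fun hh => hne ⟨by omega, hh.2⟩))
        unfold DD; push_cast; ring
      · rw [MM_right x y z hi hk]
        refine lt_of_eq_of_lt ?_ (below i k hi hk hc' z y _ h.right sz (sz - sx + DD x y z) hsz.le
          (by linarith) (Or.inr (by linarith)))
        unfold DD; push_cast; ring
  · intro i₀ j₀ hi₀ hj₀ _ ih x y z h
    have hD := DD_pos h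
    have hl := DD_left h
    have hr := DD_right h
    obtain ⟨sz, sy, hsz, hsy, hsz', hsy', he, hlt⟩ := ih z y _ h.right
    refine ⟨sz - sy + DD x y z, sy, by linarith, by linarith, by linarith, by linarith, ?_, ?_⟩
    · rw [MM_right x y z hi₀ hj₀, ← he]; unfold DD; push_cast; ring
    · intro i j hi hj hc hne
      rcases cop_cases hi hj hc with ⟨rfl, rfl⟩ | ⟨k, hk, hc', rfl⟩ | ⟨k, hk, hc', rfl⟩
      · rw [MM_one]
        have e : Lam z = Lam x + Lam y - DD x y z := by unfold DD; ring
        rw [e]; push_cast; linarith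
      · rw [MM_left x y z hk hj]
        refine lt_of_eq_of_lt ?_ (below k j hk hj hc' x z _ h.left (sz - sy + DD x y z) sz
          (by linarith) hsz.le (Or.inl (by linarith)))
        unfold DD; push_cast; ring
      · rw [MM_right x y z hi hk]
        refine lt_of_eq_of_lt ?_ (hlt i k hi hk hc' (fun hh => hne ⟨hh.1, by omega⟩))
        unfold DD; push_cast; ring

/-- The middle one of three collinear points cannot have the same value as the outer two. -/
theorem no_mid {x y z r : ℝ} (h : Good x y z) {i₁ j₁ i₂ j₂ i₃ j₃ : ℕ}
    (p1 : 0 < i₁ ∧ 0 < j₁ ∧ Nat.Coprime i₁ j₁ ∧ MM x y z i₁ j₁ = r)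
    (p2 : 0 < i₂ ∧ 0 < j₂ ∧ Nat.Coprime i₂ j₂ ∧ MM x y z i₂ j₂ = r)
    (p3 : 0 < i₃ ∧ 0 < j₃ ∧ Nat.Coprime i₃ j₃ ∧ MM x y z i₃ j₃ = r)
    (a b : ℝ) (ha : 0 < a) (hb : 0 < b)
    (hi : a * i₁ + b * i₃ = (a + b) * i₂) (hj : a * j₁ + b * j₃ = (a + b) * j₂)
    (h12 : ¬ (i₁ = i₂ ∧ j₁ = j₂)) (h32 : ¬ (i₃ = i₂ ∧ j₃ = j₂)) : False := by
  obtain ⟨sx, sy, -, -, -, -, he, hlt⟩ := support i₂ j₂ p2.1 p2.2.1 p2.2.2.1 x y z h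
  have h1 := hlt i₁ j₁ p1.1 p1.2.1 p1.2.2.1 h12
  have h3 := hlt i₃ j₃ p3.1 p3.2.1 p3.2.2.1 h32
  rw [p1.2.2.2] at h1
  rw [p2.2.2.2] at he
  rw [p3.2.2.2] at h3
  have e1 := mul_lt_mul_of_pos_left h1 ha
  have e3 := mul_lt_mul_of_pos_left h3 hb
  have : a * (i₁ * (Lam x - sx) + j₁ * (Lam y - sy)) + b * (i₃ * (Lam x - sx) + j₃ * (Lam y - sy))
      = (a + b) * Lam r := by
    rw [← he]; linear_combination (Lam x - sx) * hi + (Lam y - sy) * hj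
  linarith

theorem no_mid_i {x y z r : ℝ} (h : Good x y z) {i₁ j₁ i₂ j₂ i₃ j₃ : ℕ}
    (p1 : 0 < i₁ ∧ 0 < j₁ ∧ Nat.Coprime i₁ j₁ ∧ MM x y z i₁ j₁ = r)
    (p2 : 0 < i₂ ∧ 0 < j₂ ∧ Nat.Coprime i₂ j₂ ∧ MM x y z i₂ j₂ = r)
    (p3 : 0 < i₃ ∧ 0 < j₃ ∧ Nat.Coprime i₃ j₃ ∧ MM x y z i₃ j₃ = r)
    (h12 : i₁ < i₂) (h23 : i₂ < i₃)
    (hdet : ((i₂ : ℝ) - i₁) * (j₃ - j₁) - (i₃ - i₁) * (j₂ - j₁) = 0) : False := by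
  have e1 : (i₁ : ℝ) < i₂ := by exact_mod_cast h12
  have e2 : (i₂ : ℝ) < i₃ := by exact_mod_cast h23
  refine no_mid h p1 p2 p3 (i₃ - i₂) (i₂ - i₁) (by linarith) (by linarith) (by ring) ?_
    (by omega) (by omega)
  linear_combination hdet

theorem no_mid_j {x y z r : ℝ} (h : Good x y z) {i j₁ j₂ j₃ : ℕ}
    (p1 : 0 < i ∧ 0 < j₁ ∧ Nat.Coprime i j₁ ∧ MM x y z i j₁ = r)
    (p2 : 0 < i ∧ 0 < j₂ ∧ Nat.Coprime i j₂ ∧ MM x y z i j₂ = r)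
    (p3 : 0 < i ∧ 0 < j₃ ∧ Nat.Coprime i j₃ ∧ MM x y z i j₃ = r)
    (h12 : j₁ < j₂) (h23 : j₂ < j₃) : False := by
  have e1 : (j₁ : ℝ) < j₂ := by exact_mod_cast h12
  have e2 : (j₂ : ℝ) < j₃ := by exact_mod_cast h23
  exact no_mid h p1 p2 p3 (j₃ - j₂) (j₂ - j₁) (by linarith) (by linarith) (by ring) (by ring)
    (by omega) (by omega)

theorem no_collinear {x y z r : ℝ} (h : Good x y z) {i₁ j₁ i₂ j₂ i₃ j₃ : ℕ}
    (p1 : 0 < i₁ ∧ 0 < j₁ ∧ Nat.Coprime i₁ j₁ ∧ MM x y z i₁ j₁ = r)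
    (p2 : 0 < i₂ ∧ 0 < j₂ ∧ Nat.Coprime i₂ j₂ ∧ MM x y z i₂ j₂ = r)
    (p3 : 0 < i₃ ∧ 0 < j₃ ∧ Nat.Coprime i₃ j₃ ∧ MM x y z i₃ j₃ = r)
    (h12 : ¬ (i₁ = i₂ ∧ j₁ = j₂)) (h13 : ¬ (i₁ = i₃ ∧ j₁ = j₃)) (h23 : ¬ (i₂ = i₃ ∧ j₂ = j₃))
    (hdet : ((i₂ : ℝ) - i₁) * (j₃ - j₁) - (i₃ - i₁) * (j₂ - j₁) = 0) : False := by
  have hdetZ : ((i₂ : ℤ) - i₁) * (j₃ - j₁) - (i₃ - i₁) * (j₂ - j₁) = 0 := by exact_mod_cast hdet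
  by_cases e12 : i₁ = i₂
  · subst e12
    have hj : j₁ ≠ j₂ := fun hh => h12 ⟨rfl, hh⟩
    have : ((i₃ : ℤ) - i₁) * (j₂ - j₁) = 0 := by linear_combination -hdetZ
    rcases mul_eq_zero.1 this with h0 | h0
    · have : i₃ = i₁ := by omega
      subst this
      have hj2 : j₁ ≠ j₃ := fun hh => h13 ⟨rfl, hh⟩
      have hj3 : j₂ ≠ j₃ := fun hh => h23 ⟨rfl, hh⟩
      rcases lt_or_gt_of_ne hj with a | a <;> rcases lt_or_gt_of_ne hj2 with b | b <;>
        rcases lt_or_gt_of_ne hj3 with c | c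
      · exact no_mid_j h p1 p2 p3 a c
      · exact no_mid_j h p1 p3 p2 b c
      · omega
      · exact no_mid_j h p3 p1 p2 b a
      · exact no_mid_j h p2 p1 p3 a b
      · omega
      · exact no_mid_j h p2 p3 p1 c b
      · exact no_mid_j h p3 p2 p1 c a
    · omega
  · by_cases e13 : i₁ = i₃
    · subst e13
      have : ((i₂ : ℤ) - i₁) * (j₃ - j₁) = 0 := by linear_combination hdetZ
      rcases mul_eq_zero.1 this with h0 | h0 <;> omega
    · by_cases e23 : i₂ = i₃
      · subst e23
        have : ((i₂ : ℤ) - i₁) * (j₃ - j₂) = 0 := by linear_combination hdetZ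
        rcases mul_eq_zero.1 this with h0 | h0 <;> omega
      · rcases lt_or_gt_of_ne e12 with a | a <;> rcases lt_or_gt_of_ne e13 with b | b <;>
          rcases lt_or_gt_of_ne e23 with c | c
        · exact no_mid_i h p1 p2 p3 a c hdet
        · exact no_mid_i h p1 p3 p2 b c (by linear_combination -hdet)
        · omega
        · exact no_mid_i h p3 p1 p2 b a (by linear_combination hdet)
        · exact no_mid_i h p2 p1 p3 a b (by linear_combination -hdet)
        · omega
        · exact no_mid_i h p2 p3 p1 c b (by linear_combination hdet)
        · exact no_mid_i h p3 p2 p1 c a (by linear_combination -hdet)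

/-- In a cone whose top value is large there are no three equal values. -/
theorem no_three {x y z r R Y : ℝ} (h : Good x y z) (hR : ∀ k : ℕ, (2 : ℝ) ^ k ≤ 2 * r / 3 → k ≤ R)
    (hR0 : 0 < R) (hY : 8 * R ≤ Y) (hz : Y ≤ z) {i₁ j₁ i₂ j₂ i₃ j₃ : ℕ}
    (p1 : 0 < i₁ ∧ 0 < j₁ ∧ Nat.Coprime i₁ j₁ ∧ MM x y z i₁ j₁ = r)
    (p2 : 0 < i₂ ∧ 0 < j₂ ∧ Nat.Coprime i₂ j₂ ∧ MM x y z i₂ j₂ = r)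
    (p3 : 0 < i₃ ∧ 0 < j₃ ∧ Nat.Coprime i₃ j₃ ∧ MM x y z i₃ j₃ = r)
    (h12 : ¬ (i₁ = i₂ ∧ j₁ = j₂)) (h13 : ¬ (i₁ = i₃ ∧ j₁ = j₃)) (h23 : ¬ (i₂ = i₃ ∧ j₂ = j₃)) :
    False := by
  by_cases hdet : ((i₂ : ℝ) - i₁) * (j₃ - j₁) - (i₃ - i₁) * (j₂ - j₁) = 0
  · exact no_collinear h p1 p2 p3 h12 h13 h23 hdet
  have hD := DD_pos h
  have key : ∀ i j : ℕ, (0 < i ∧ 0 < j ∧ Nat.Coprime i j ∧ MM x y z i j = r) →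
      0 ≤ i * Lam x + j * Lam y - Lam r ∧ i * Lam x + j * Lam y - Lam r ≤ R * DD x y z ∧
      0 ≤ (j : ℝ) ∧ (j : ℝ) ≤ R := by
    intro i j ⟨hi, hj, hc, hm⟩
    have g := growth2 hi hj hc h
    obtain ⟨a, b⟩ := almost_linear i j hi hj hc x y z h
    rw [hm] at g a b
    have hk := hR _ g
    push_cast at hk
    have hi' : (0 : ℝ) ≤ i := by positivity
    have hj' : (0 : ℝ) ≤ j := by positivity
    exact ⟨a, b.trans (mul_le_mul_of_nonneg_right hk hD.le), hj', by linarith⟩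
  obtain ⟨a1, b1, c1, d1⟩ := key _ _ p1
  obtain ⟨a2, b2, c2, d2⟩ := key _ _ p2
  obtain ⟨a3, b3, c3, d3⟩ := key _ _ p3
  have hdet1 : 1 ≤ |((i₂ : ℝ) - i₁) * (j₃ - j₁) - (i₃ - i₁) * (j₂ - j₁)| := by
    have : ((i₂ : ℤ) - i₁) * (j₃ - j₁) - (i₃ - i₁) * (j₂ - j₁) ≠ 0 := by exact_mod_cast hdet
    exact_mod_cast Int.one_le_abs this
  have hL := half_lt_Lam h.hx
  have f2 : |(i₂ * Lam x + j₂ * Lam y) - (i₁ * Lam x + j₁ * Lam y)| ≤ R * DD x y z := by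
    rw [abs_le]; constructor <;> linarith
  have f3 : |(i₃ * Lam x + j₃ * Lam y) - (i₁ * Lam x + j₁ * Lam y)| ≤ R * DD x y z := by
    rw [abs_le]; constructor <;> linarith
  have g2 : |(j₂ : ℝ) - j₁| ≤ R := by rw [abs_le]; constructor <;> linarith
  have g3 : |(j₃ : ℝ) - j₁| ≤ R := by rw [abs_le]; constructor <;> linarith
  have id : Lam x * (((i₂ : ℝ) - i₁) * (j₃ - j₁) - (i₃ - i₁) * (j₂ - j₁)) =
      ((i₂ * Lam x + j₂ * Lam y) - (i₁ * Lam x + j₁ * Lam y)) * (j₃ - j₁)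
      - ((i₃ * Lam x + j₃ * Lam y) - (i₁ * Lam x + j₁ * Lam y)) * (j₂ - j₁) := by ring
  have hb : Lam x ≤ R * DD x y z * R + R * DD x y z * R := by
    calc Lam x ≤ Lam x * |((i₂ : ℝ) - i₁) * (j₃ - j₁) - (i₃ - i₁) * (j₂ - j₁)| :=
          le_mul_of_one_le_right (by linarith) hdet1
      _ = |Lam x * (((i₂ : ℝ) - i₁) * (j₃ - j₁) - (i₃ - i₁) * (j₂ - j₁))| := by
          rw [abs_mul, abs_of_pos (show 0 < Lam x by linarith)]
      _ ≤ _ := by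
          rw [id]
          refine (abs_sub _ _).trans ?_
          rw [abs_mul, abs_mul]
          have hRD : 0 ≤ R * DD x y z := by positivity
          exact add_le_add (mul_le_mul f2 g3 (abs_nonneg _) hRD)
            (mul_le_mul f3 g2 (abs_nonneg _) hRD)
  have hD2 : DD x y z ≤ 16 / (8 * R) ^ 2 := by
    refine (DD_le h).trans ?_
    apply div_le_div_of_nonneg_left (by norm_num) (by positivity)
    apply pow_le_pow_left₀ (by positivity)
    linarith
  have hfin : R * DD x y z * R ≤ 1 / 4 := by
    calc R * DD x y z * R ≤ R * (16 / (8 * R) ^ 2) * R := by gcongr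
      _ = 1 / 4 := by field_simp; norm_num
  linarith

/-- Primitive vectors in a cone with value in `A`. -/
def QQ (x y z : ℝ) (A : Set ℝ) : Set (ℕ × ℕ) :=
  {p | 0 < p.1 ∧ 0 < p.2 ∧ Nat.Coprime p.1 p.2 ∧ MM x y z p.1 p.2 ∈ A}

theorem QQ_subset {x y z : ℝ} (h : Good x y z) {A : Set ℝ} {B : ℝ} (hA : ∀ a ∈ A, a ≤ B) (N : ℕ)
    (hN : ∀ k : ℕ, (2 : ℝ) ^ k ≤ 2 * B / 3 → k ≤ N) :
    QQ x y z A ⊆ ((Finset.Icc 1 N ×ˢ Finset.Icc 1 N : Finset (ℕ × ℕ)) : Set (ℕ × ℕ)) := by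
  rintro ⟨i, j⟩ ⟨hi, hj, hc, hm⟩
  have g := growth2 hi hj hc h
  have := hN _ (g.trans (by have := hA _ hm; simp only at this; linarith))
  simp only at hi hj
  simp only [Finset.coe_product, Finset.coe_Icc, Set.mem_prod, Set.mem_Icc]
  omega

theorem exists_log_bound (B : ℝ) : ∃ N : ℕ, ∀ k : ℕ, (2 : ℝ) ^ k ≤ B → k ≤ N := by
  obtain ⟨N, hN⟩ := pow_unbounded_of_one_lt B (show (1 : ℝ) < 2 by norm_num)
  refine ⟨N, fun k hk => ?_⟩
  exact ((pow_lt_pow_iff_right₀ (by norm_num : (1 : ℝ) < 2)).1 (hk.trans_lt hN)).le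

theorem QQ_finite {x y z : ℝ} (h : Good x y z) {A : Set ℝ} {B : ℝ} (hA : ∀ a ∈ A, a ≤ B) :
    (QQ x y z A).Finite := by
  obtain ⟨N, hN⟩ := exists_log_bound (2 * B / 3)
  exact (Finset.finite_toSet _).subset (QQ_subset h hA N hN)

def phiL (p : ℕ × ℕ) : ℕ × ℕ := (p.1 + p.2, p.2)
def phiR (p : ℕ × ℕ) : ℕ × ℕ := (p.1, p.1 + p.2)

theorem phiL_inj : Function.Injective phiL := by
  rintro ⟨a, b⟩ ⟨c, d⟩ h
  simp only [phiL, Prod.mk.injEq] at h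
  ext <;> simp <;> omega

theorem phiR_inj : Function.Injective phiR := by
  rintro ⟨a, b⟩ ⟨c, d⟩ h
  simp only [phiR, Prod.mk.injEq] at h
  ext <;> simp <;> omega

theorem QQ_sub (x y z : ℝ) (A : Set ℝ) :
    QQ x y z A ⊆ insert (1, 1) (phiL '' QQ x z (x * z - y) A ∪ phiR '' QQ z y (z * y - x) A) := by
  rintro ⟨i, j⟩ ⟨hi, hj, hc, hm⟩
  simp only at hi hj hc hm
  rcases cop_cases hi hj hc with ⟨rfl, rfl⟩ | ⟨k, hk, hc', rfl⟩ | ⟨k, hk, hc', rfl⟩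
  · exact Or.inl rfl
  · rw [MM_left x y z hk hj] at hm
    exact Or.inr (Or.inl ⟨(k, j), ⟨hk, hj, hc', hm⟩, rfl⟩)
  · rw [MM_right x y z hi hk] at hm
    exact Or.inr (Or.inr ⟨(i, k), ⟨hi, hk, hc', hm⟩, rfl⟩)

theorem QQ_sup (x y z : ℝ) (A : Set ℝ) (hz : z ∈ A) :
    insert (1, 1) (phiL '' QQ x z (x * z - y) A ∪ phiR '' QQ z y (z * y - x) A) ⊆ QQ x y z A := by
  rintro p (rfl | ⟨⟨i, j⟩, ⟨hi, hj, hc, hm⟩, rfl⟩ | ⟨⟨i, j⟩, ⟨hi, hj, hc, hm⟩, rfl⟩)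
  · refine ⟨by norm_num, by norm_num, by norm_num, ?_⟩
    simp only [MM_one]; exact hz
  · simp only at hi hj hc hm
    refine ⟨by simp only [phiL]; omega, hj, by simpa [phiL] using hc, ?_⟩
    simp only [phiL]
    rw [MM_left x y z hi hj]; exact hm
  · simp only at hi hj hc hm
    refine ⟨hi, by simp only [phiR]; omega, by simpa [phiR] using hc, ?_⟩
    simp only [phiR]
    rw [MM_right x y z hi hj]; exact hm

theorem count {r R Y : ℝ} (hR : ∀ k : ℕ, (2 : ℝ) ^ k ≤ 2 * r / 3 → k ≤ R)
    (hR0 : 0 < R) (hY : 8 * R ≤ Y) : ∀ n : ℕ, ∀ x y z : ℝ, Good x y z →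
    (QQ x y z (Set.Iio Y)).ncard ≤ n →
    (QQ x y z {r}).ncard ≤ 3 * (QQ x y z (Set.Iio Y)).ncard + 2 := by
  intro n
  induction n with
  | zero =>
    intro x y z h hn
    have hfK : (QQ x y z (Set.Iio Y)).Finite := QQ_finite h (B := Y) (fun a ha => le_of_lt ha)
    have hfS : (QQ x y z {r}).Finite := QQ_finite h (B := r) (fun a ha => le_of_eq ha)
    have hz : Y ≤ z := by
      by_contra hcon
      have hmem : ((1, 1) : ℕ × ℕ) ∈ QQ x y z (Set.Iio Y) :=
        QQ_sup x y z (Set.Iio Y) (not_le.1 hcon) (Set.mem_insert _ _)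
      have := (Set.ncard_pos hfK).2 ⟨_, hmem⟩
      omega
    by_contra hcon
    have h2 : 2 < (QQ x y z {r}).ncard := by omega
    obtain ⟨a, b, c, ha, hb, hc, hab, hac, hbc⟩ := (Set.two_lt_ncard_iff hfS).1 h2
    exact no_three h hR hR0 hY hz ha hb hc (fun e => hab (Prod.ext e.1 e.2))
      (fun e => hac (Prod.ext e.1 e.2)) (fun e => hbc (Prod.ext e.1 e.2))
  | succ n ih =>
    intro x y z h hn
    have hfK : (QQ x y z (Set.Iio Y)).Finite := QQ_finite h (B := Y) (fun a ha => le_of_lt ha)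
    have hfS : (QQ x y z {r}).Finite := QQ_finite h (B := r) (fun a ha => le_of_eq ha)
    rcases le_or_gt Y z with hz | hz
    · by_contra hcon
      have h2 : 2 < (QQ x y z {r}).ncard := by omega
      obtain ⟨a, b, c, ha, hb, hc, hab, hac, hbc⟩ := (Set.two_lt_ncard_iff hfS).1 h2
      exact no_three h hR hR0 hY hz ha hb hc (fun e => hab (Prod.ext e.1 e.2))
        (fun e => hac (Prod.ext e.1 e.2)) (fun e => hbc (Prod.ext e.1 e.2))
    · have fKl := QQ_finite h.left (A := Set.Iio Y) (B := Y) (fun a ha => le_of_lt ha)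
      have fKr := QQ_finite h.right (A := Set.Iio Y) (B := Y) (fun a ha => le_of_lt ha)
      have fSl := QQ_finite h.left (A := {r}) (B := r) (fun a ha => le_of_eq ha)
      have fSr := QQ_finite h.right (A := {r}) (B := r) (fun a ha => le_of_eq ha)
      have hK : 1 + (QQ x z (x * z - y) (Set.Iio Y)).ncard
          + (QQ z y (z * y - x) (Set.Iio Y)).ncard ≤ (QQ x y z (Set.Iio Y)).ncard := by
        refine le_trans (le_of_eq ?_) (Set.ncard_le_ncard (QQ_sup x y z _ hz) hfK)
        rw [Set.ncard_insert_of_notMem _ ((fKl.image _).union (fKr.image _)),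
          Set.ncard_union_eq _ (fKl.image _) (fKr.image _),
          Set.ncard_image_of_injective _ phiL_inj, Set.ncard_image_of_injective _ phiR_inj]
        · omega
        · rw [Set.disjoint_left]
          rintro p ⟨⟨i, j⟩, ⟨hi, hj, -⟩, rfl⟩ ⟨⟨i', j'⟩, ⟨hi', hj', -⟩, he⟩
          simp only [phiL, phiR, Prod.mk.injEq] at *
          omega
        · rintro (⟨⟨i, j⟩, ⟨hi, hj, -⟩, he⟩ | ⟨⟨i, j⟩, ⟨hi, hj, -⟩, he⟩) <;>
          simp only [phiL, phiR, Prod.mk.injEq] at * <;>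
          omega
      have hS : (QQ x y z {r}).ncard ≤ 1 + (QQ x z (x * z - y) {r}).ncard
          + (QQ z y (z * y - x) {r}).ncard := by
        refine (Set.ncard_le_ncard (QQ_sub x y z _)
          (((fSl.image _).union (fSr.image _)).insert _)).trans ?_
        refine (Set.ncard_insert_le _ _).trans ?_
        have := Set.ncard_union_le (phiL '' QQ x z (x * z - y) {r}) (phiR '' QQ z y (z * y - x) {r})
        rw [Set.ncard_image_of_injective _ phiL_inj, Set.ncard_image_of_injective _ phiR_inj] at this
        omega
      have h1 := ih x z _ h.left (by omega)
      have h2 := ih z y _ h.right (by omega)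
      omega

theorem TT_ext_left : ∀ i j, 0 < i → 0 < j → Nat.Coprime i j → ∀ x y z : ℝ,
    ∃ i' j', 0 < i' ∧ 0 < j' ∧ Nat.Coprime i' j' ∧ TT x y z i' j' =
      ((TT x y z i j).1, (TT x y z i j).2.2,
        (TT x y z i j).1 * (TT x y z i j).2.2 - (TT x y z i j).2.1) := by
  apply cop_ind
  · intro x y z
    refine ⟨1 + 1, 1, by norm_num, by norm_num, by norm_num, ?_⟩
    rw [TT_left x y z one_pos one_pos, TT_one, TT_one]
  · intro i j hi hj _ ih x y z
    obtain ⟨i', j', hi', hj', hc', he⟩ := ih x z (x * z - y)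
    refine ⟨i' + j', j', by omega, hj', by simpa using hc', ?_⟩
    rw [TT_left x y z hi' hj', TT_left x y z hi hj, he]
  · intro i j hi hj _ ih x y z
    obtain ⟨i', j', hi', hj', hc', he⟩ := ih z y (z * y - x)
    refine ⟨i', i' + j', hi', by omega, by simpa using hc', ?_⟩
    rw [TT_right x y z hi' hj', TT_right x y z hi hj, he]

theorem TT_ext_right : ∀ i j, 0 < i → 0 < j → Nat.Coprime i j → ∀ x y z : ℝ,
    ∃ i' j', 0 < i' ∧ 0 < j' ∧ Nat.Coprime i' j' ∧ TT x y z i' j' =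
      ((TT x y z i j).2.2, (TT x y z i j).2.1,
        (TT x y z i j).2.2 * (TT x y z i j).2.1 - (TT x y z i j).1) := by
  apply cop_ind
  · intro x y z
    refine ⟨1, 1 + 1, by norm_num, by norm_num, by norm_num, ?_⟩
    rw [TT_right x y z one_pos one_pos, TT_one, TT_one]
  · intro i j hi hj _ ih x y z
    obtain ⟨i', j', hi', hj', hc', he⟩ := ih x z (x * z - y)
    refine ⟨i' + j', j', by omega, hj', by simpa using hc', ?_⟩
    rw [TT_left x y z hi' hj', TT_left x y z hi hj, he]
  · intro i j hi hj _ ih x y z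
    obtain ⟨i', j', hi', hj', hc', he⟩ := ih z y (z * y - x)
    refine ⟨i', i' + j', hi', by omega, by simpa using hc', ?_⟩
    rw [TT_right x y z hi' hj', TT_right x y z hi hj, he]

/-- Unordered match between a pair of integers and the first entries of a state. -/
def Matches (a b c : ℤ) (i j : ℕ) : Prop :=
  TT 3 3 6 i j = (3 * (a : ℝ), 3 * (b : ℝ), 3 * (c : ℝ)) ∨
  TT 3 3 6 i j = (3 * (b : ℝ), 3 * (a : ℝ), 3 * (c : ℝ))

theorem Matches.symm {a b c : ℤ} {i j : ℕ} (h : Matches a b c i j) : Matches b a c i j :=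
  Or.symm h

/-- Every Markoff triple other than `(1,1,1)` occurs in the tree. -/
theorem reach : ∀ n : ℕ, ∀ a b c : ℤ, c ≤ n → 0 < a → a ≤ b → b ≤ c → 2 ≤ c →
    a ^ 2 + b ^ 2 + c ^ 2 = 3 * a * b * c →
    ∃ i j, 0 < i ∧ 0 < j ∧ Nat.Coprime i j ∧ Matches a b c i j := by
  intro n
  induction n with
  | zero => intro a b c h; intros; push_cast at h; omega
  | succ n ih =>
    intro a b c hn ha hab hbc hc heq
    rcases eq_or_lt_of_le (show 1 ≤ b by omega) with hb | hb
    · have ha1 : a = 1 := by omega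
      subst hb
      subst ha1
      have : (c - 1) * (c - 2) = 0 := by linear_combination heq
      have hc2 : c = 2 := by
        rcases mul_eq_zero.1 this with h | h <;> omega
      subst hc2
      refine ⟨1, 1, one_pos, one_pos, by norm_num, Or.inl ?_⟩
      rw [TT_one]; norm_num
    · obtain ⟨d, hd⟩ : ∃ d, d = 3 * a * b - c := ⟨_, rfl⟩
      have hcd : c * d = a ^ 2 + b ^ 2 := by rw [hd]; linear_combination -heq
      have hd0 : 0 < d := by
        have : 0 < c * d := by rw [hcd]; positivity
        exact (mul_pos_iff_of_pos_left (show 0 < c by omega)).1 this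
      have hf : (b - c) * (b - d) < 0 := by
        have e : (b - c) * (b - d) = 2 * b ^ 2 + a ^ 2 - 3 * a * b ^ 2 := by
          rw [hd]; linear_combination -heq
        rw [e]
        rcases eq_or_lt_of_le (show 1 ≤ a by omega) with h1 | h1
        · rw [← h1]; nlinarith
        · nlinarith [mul_pos ha ha]
      have hbd : d < b := by
        by_contra hcon
        have := mul_nonneg (show 0 ≤ c - b by omega) (show 0 ≤ d - b by omega)
        nlinarith
      have hbc' : b < c := by
        rcases eq_or_lt_of_le hbc with h | h
        · rw [h] at hf; simp at hf
        · exact h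
      have heq' : a ^ 2 + d ^ 2 + b ^ 2 = 3 * a * d * b := by
        rw [hd]; linear_combination heq
      have hex : ∃ i j, 0 < i ∧ 0 < j ∧ Nat.Coprime i j ∧ Matches a d b i j := by
        rcases le_total a d with h | h
        · exact ih a d b (by push_cast at hn; omega) ha h hbd.le (by omega) heq'
        · obtain ⟨i, j, hi, hj, hc, hm⟩ := ih d a b (by push_cast at hn; omega) hd0 h hab (by omega)
            (by linear_combination heq')
          exact ⟨i, j, hi, hj, hc, hm.symm⟩
      have hcR : (c : ℝ) = 3 * a * b - d := by rw [hd]; push_cast; ring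
      obtain ⟨i, j, hi, hj, hcop, hm | hm⟩ := hex
      · obtain ⟨i', j', hi', hj', hc', he⟩ := TT_ext_left i j hi hj hcop 3 3 6
        refine ⟨i', j', hi', hj', hc', Or.inl ?_⟩
        rw [he, hm, hcR]
        simp only [Prod.mk.injEq, true_and]
        ring
      · obtain ⟨i', j', hi', hj', hc', he⟩ := TT_ext_right i j hi hj hcop 3 3 6
        refine ⟨i', j', hi', hj', hc', Or.inr ?_⟩
        rw [he, hm, hcR]
        simp only [Prod.mk.injEq, true_and]
        ring

theorem fiber_le (m : ℕ) (hm : 2 ≤ m) :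
    Set.ncard {t : ℕ × ℕ × ℕ | IsMarkoffTriple t ∧ t.1 ≤ t.2.1 ∧ t.2.1 ≤ t.2.2 ∧ t.2.2 = m} ≤
      (QQ 3 3 6 {3 * (m : ℝ)}).ncard := by
  have hex : ∀ t : ℕ × ℕ × ℕ, ∃ p : ℕ × ℕ,
      (IsMarkoffTriple t ∧ t.1 ≤ t.2.1 ∧ t.2.1 ≤ t.2.2 ∧ t.2.2 = m) →
      0 < p.1 ∧ 0 < p.2 ∧ Nat.Coprime p.1 p.2 ∧ Matches t.1 t.2.1 t.2.2 p.1 p.2 := by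
    intro t
    by_cases h : IsMarkoffTriple t ∧ t.1 ≤ t.2.1 ∧ t.2.1 ≤ t.2.2 ∧ t.2.2 = m
    · obtain ⟨⟨h1, h2, h3, h4⟩, h5, h6, h7⟩ := h
      obtain ⟨i, j, hi, hj, hc, hM⟩ := reach t.2.2 t.1 t.2.1 t.2.2 (by omega) (by omega) (by omega)
        (by omega) (by omega) (by exact_mod_cast h4)
      exact ⟨(i, j), fun _ => ⟨hi, hj, hc, hM⟩⟩
    · exact ⟨(0, 0), fun h' => absurd h' h⟩
  choose f hf using hex
  refine Set.ncard_le_ncard_of_injOn f ?_ ?_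
    (QQ_finite good_root (B := 3 * (m : ℝ)) (fun a ha => le_of_eq ha))
  · intro t ht
    obtain ⟨h1, h2, h3, h4⟩ := hf t ht
    refine ⟨h1, h2, h3, ?_⟩
    have : t.2.2 = m := ht.2.2.2
    rw [MM]
    rcases h4 with h4 | h4 <;> rw [h4] <;> simp [this]
  · intro t ht t' ht' he
    obtain ⟨-, -, -, h4⟩ := hf t ht
    obtain ⟨-, -, -, h4'⟩ := hf t' ht'
    rw [he] at h4
    obtain ⟨-, o1, -, e1⟩ := ht
    obtain ⟨-, o2, -, e2⟩ := ht'
    obtain ⟨a, b, c⟩ := t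
    obtain ⟨a', b', c'⟩ := t'
    simp only at o1 e1 o2 e2
    simp only [Matches] at h4 h4'
    rcases h4 with h | h <;> rcases h4' with h' | h' <;> rw [h] at h' <;>
      simp only [Prod.mk.injEq, Int.cast_natCast, mul_right_inj' (show (3 : ℝ) ≠ 0 by norm_num),
        Nat.cast_inj] at h' ⊢ <;> omega

/-- For every `ε > 0` there is a constant `C(ε) > 0` such that, for every `m ≥ 2`, the
number of Markoff triples `(a, b, c)` with `a ≤ b ≤ c` and largest entry `c = m` is at
most `C(ε) · (log m)^ε`. -/
theorem markoff_fiber_subpolynomial_bound :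
    ∀ ε : ℝ, 0 < ε → ∃ C : ℝ, 0 < C ∧ ∀ m : ℕ, 2 ≤ m →
      (Set.ncard {t : ℕ × ℕ × ℕ | IsMarkoffTriple t ∧ t.1 ≤ t.2.1 ∧ t.2.1 ≤ t.2.2 ∧
          t.2.2 = m} : ℝ)
        ≤ C * Real.log m ^ ε := by
  intro ε hε
  refine ⟨14 * ((26 : ℝ) ^ (ε / 2) / (ε / 2)) ^ 2, by positivity, ?_⟩
  intro m hm
  have hl2 := Real.log_two_gt_d9
  have hm' : (2 : ℝ) ≤ m := by exact_mod_cast hm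
  have hlm : Real.log 2 ≤ Real.log m := Real.log_le_log (by norm_num) hm'
  have hY0 : 0 < 26 * Real.log m := by linarith
  have hpow : ∀ (k : ℕ) (B : ℝ), 0 < B → (2 : ℝ) ^ k ≤ B → k * Real.log 2 ≤ Real.log B := by
    intro k B hB h
    have := Real.log_le_log (by positivity) h
    rwa [Real.log_pow] at this
  have hR : ∀ k : ℕ, (2 : ℝ) ^ k ≤ 2 * (3 * (m : ℝ)) / 3 → (k : ℝ) ≤ 3 * Real.log m := by
    intro k hk
    have h1 := hpow k (2 * m) (by linarith) (by linarith)
    rw [Real.log_mul (by norm_num) (by linarith)] at h1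
    have hk0 : (0 : ℝ) ≤ k := by positivity
    nlinarith
  have hc := count (Y := 26 * Real.log m) hR (by linarith) (by linarith) _ 3 3 6 good_root le_rfl
  have hLY1 : 1 ≤ Real.log (26 * Real.log m) := by
    rw [Real.le_log_iff_exp_le hY0]
    linarith [Real.exp_one_lt_d9]
  have hK : ((QQ 3 3 6 (Set.Iio (26 * Real.log m))).ncard : ℝ)
      ≤ (2 * Real.log (26 * Real.log m)) ^ 2 := by
    have hsub := QQ_subset good_root (A := Set.Iio (26 * Real.log m)) (B := 26 * Real.log m)
      (fun a ha => le_of_lt ha) ⌊2 * Real.log (26 * Real.log m)⌋₊ (by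
        intro k hk
        apply Nat.le_floor
        have h1 := hpow k (26 * Real.log m) hY0 (by linarith)
        have hk0 : (0 : ℝ) ≤ k := by positivity
        nlinarith)
    have h1 := Set.ncard_le_ncard hsub (Finset.finite_toSet _)
    rw [Set.ncard_coe_finset, Finset.card_product, Nat.card_Icc, Nat.add_sub_cancel] at h1
    have h2 : (⌊2 * Real.log (26 * Real.log m)⌋₊ : ℝ) ≤ 2 * Real.log (26 * Real.log m) :=
      Nat.floor_le (by linarith)
    calc ((QQ 3 3 6 (Set.Iio (26 * Real.log m))).ncard : ℝ)
        ≤ (⌊2 * Real.log (26 * Real.log m)⌋₊ : ℝ) * ⌊2 * Real.log (26 * Real.log m)⌋₊ := by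
          exact_mod_cast h1
      _ ≤ _ := by rw [sq]; gcongr
  have hlog : Real.log (26 * Real.log m) ≤ (26 * Real.log m) ^ (ε / 2) / (ε / 2) :=
    Real.log_le_rpow_div hY0.le (by positivity)
  have hf := (fiber_le m hm).trans hc
  have hf' : (Set.ncard {t : ℕ × ℕ × ℕ | IsMarkoffTriple t ∧ t.1 ≤ t.2.1 ∧ t.2.1 ≤ t.2.2 ∧
      t.2.2 = m} : ℝ) ≤ 3 * ((QQ 3 3 6 (Set.Iio (26 * Real.log m))).ncard : ℝ) + 2 := by
    exact_mod_cast hf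
  have hlmpos : 0 < Real.log m := by linarith
  calc _ ≤ 3 * ((QQ 3 3 6 (Set.Iio (26 * Real.log m))).ncard : ℝ) + 2 := hf'
    _ ≤ 14 * Real.log (26 * Real.log m) ^ 2 := by nlinarith
    _ ≤ 14 * ((26 * Real.log m) ^ (ε / 2) / (ε / 2)) ^ 2 := by gcongr
    _ = _ := by
      rw [Real.mul_rpow (by norm_num) hlmpos.le]
      have : Real.log m ^ ε = (Real.log m ^ (ε / 2)) ^ 2 := by
        rw [← Real.rpow_natCast, ← Real.rpow_mul hlmpos.le]
        congr 1
        push_cast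
        ring
      rw [this]
      ring
end
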